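/- arXiv:1304.2244 — 7 statements merged into one kernel-verified Lean document; each statement's English description precedes it below -/
import Mathlib

section
/- For every auction (M, v_1, …, v_n) with nonnegative, monotone, normalized valuations, and for every allocation Y = (Y_0, Y_1, …, Y_n), there exists a Combinatorial Walrasian Equilibrium (X, p) whose social welfare satisfies SW(X) ≥ (1/2)·SW(Y). -/
open Finset

/-- A valuation is nonnegative, monotone, and normalized. -/
def ValidVal {ι : Type} [Fintype ι] [DecidableEq ι] (v : Finset ι → ℝ) : Prop :=
  (∀ S, 0 ≤ v S) ∧ (∀ S T : Finset ι, S ⊆ T → v S ≤ v T) ∧ v ∅ = 0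

/-- The agents' bundles are pairwise disjoint (the unallocated bundle `X₀` is the complement). -/
def IsAlloc {ι : Type} [Fintype ι] [DecidableEq ι] {n : ℕ} (X : Fin n → Finset ι) : Prop :=
  ∀ i j, i ≠ j → Disjoint (X i) (X j)

/-- The unallocated bundle `X₀` of an allocation. -/
def unalloc {ι : Type} [Fintype ι] [DecidableEq ι] {n : ℕ} (X : Fin n → Finset ι) : Finset ι :=
  Finset.univ \ Finset.univ.sup X

/-- `Γ(X)`: the nonempty bundles among `X₀, X₁, …, Xₙ`. -/
def Bundles {ι : Type} [Fintype ι] [DecidableEq ι] {n : ℕ} (X : Fin n → Finset ι) :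
    Finset (Finset ι) :=
  (insert (unalloc X) (Finset.image X Finset.univ)).erase ∅

/-- Quasilinear utility of a set `S` of bundles under bundle prices `p`. -/
def util {ι : Type} [Fintype ι] [DecidableEq ι] (v : Finset ι → ℝ) (p : Finset ι → ℝ)
    (S : Finset (Finset ι)) : ℝ :=
  v (S.sup id) - ∑ B ∈ S, p B

/-- The set of bundles assigned to agent `i`: `{Xᵢ}` if nonempty, else `∅`. -/
def own {ι : Type} [Fintype ι] [DecidableEq ι] {n : ℕ} (X : Fin n → Finset ι) (i : Fin n) :
    Finset (Finset ι) :=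
  if X i = ∅ then ∅ else {X i}

/-- Combinatorial Walrasian Equilibrium: an allocation together with nonnegative prices on the
bundles of `Γ(X)` such that each agent's own assignment maximizes his quasilinear utility
over all sets of bundles `S ⊆ Γ(X)`. -/
def IsCWE {ι : Type} [Fintype ι] [DecidableEq ι] {n : ℕ} (v : Fin n → Finset ι → ℝ)
    (X : Fin n → Finset ι) (p : Finset ι → ℝ) : Prop :=
  IsAlloc X ∧ (∀ B ∈ Bundles X, 0 ≤ p B) ∧
    ∀ i : Fin n, ∀ S ⊆ Bundles X, util (v i) p S ≤ util (v i) p (own X i)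

/-- Social welfare of an allocation. -/
def SW {ι : Type} [Fintype ι] [DecidableEq ι] {n : ℕ} (v : Fin n → Finset ι → ℝ)
    (X : Fin n → Finset ι) : ℝ :=
  ∑ i, v i (X i)

/-- Revenue of a priced allocation: the sum of prices of the allocated bundles. -/
def Revenue {ι : Type} [Fintype ι] [DecidableEq ι] {n : ℕ} (X : Fin n → Finset ι)
    (p : Finset ι → ℝ) : ℝ :=
  ∑ i ∈ Finset.univ.filter (fun i => X i ≠ ∅), p (X i)

/-!
Treat the bundles `Y k` as indivisible items with reserve prices `b k = max 0 (v k (Y k)) / 2` and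
run an ascending auction in steps of `ε`: an agent without items who would gain more than `ε` takes
his favourite set among those that split no current bundle, evicts the holders of the bundles in
it, and pays `ε` more than its current price. Every agent holding items stays satisfied up to `ε`,
since merging bundles only shrinks the choice of the others. Prices are bounded, so a state whose
total price is within `ε` of the supremum admits no further step and is an `ε`-equilibrium. There
are finitely many assignments and the prices stay in a compact box, so letting `ε → 0` gives an
exact equilibrium.

For the welfare, agent `i` has nonnegative utility and a sold item `i` pays at least `b i`; if item
`i` is unsold, agent `i` could buy it at price `b i`, so his utility is at least
`v i (Y i) - b i = b i` when `v i (Y i)` is positive. Either way `i` accounts for at least `b i` of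
the sum of utilities and payments.
-/

open Filter Function Topology

section Auction

variable {α κ : Type*}

/-- Quasilinear utility of the item set `S` under the item prices `p`, for an agent with
valuation `u`. -/
def netValue (u : Finset κ → ℝ) (p : κ → ℝ) (S : Finset κ) : ℝ :=
  u S - ∑ k ∈ S, p k

theorem netValue_empty {u : Finset κ → ℝ} (hu : u ∅ = 0) (p : κ → ℝ) : netValue u p ∅ = 0 := by
  simp [netValue, hu]

/-- `S` contains each bundle of `X` entirely or not at all, so that it can be bought without
breaking up a bundle; items in no bundle may be included freely. -/
def Unsplit (X : α → Finset κ) (S : Finset κ) : Prop :=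
  ∀ i, X i ⊆ S ∨ Disjoint (X i) S

theorem unsplit_empty (X : α → Finset κ) : Unsplit X ∅ :=
  fun _ ↦ Or.inr (disjoint_empty_right _)

theorem unsplit_singleton {X : α → Finset κ} {k : κ} (hk : ∀ i, k ∉ X i) : Unsplit X {k} :=
  fun i ↦ Or.inr (disjoint_singleton_right.2 (hk i))

theorem unsplit_biUnion [DecidableEq κ] {X : α → Finset κ} (hX : Pairwise (Disjoint on X))
    (J : Finset α) : Unsplit X (J.biUnion X) := by
  intro i
  by_cases hi : i ∈ J
  · exact Or.inl (subset_biUnion_of_mem X hi)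
  · exact Or.inr ((disjoint_biUnion_right _ _ _).2 fun j hj ↦ hX fun hij ↦ hi (hij ▸ hj))

/-- Up to an additive error `e`, the bundle `B` maximizes utility among the sets that do not split
a bundle of `X`. -/
def AlmostDemands (u : Finset κ → ℝ) (p : κ → ℝ) (X : α → Finset κ) (e : ℝ) (B : Finset κ) :
    Prop :=
  ∀ S, Unsplit X S → netValue u p S ≤ netValue u p B + e

/-- The bundles of `X` are disjoint, no price is below its reserve price `b k`, and the unsold
items are priced at their reserve. -/
structure IsReserveOutcome (b : κ → ℝ) (X : α → Finset κ) (p : κ → ℝ) : Prop where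
  disjoint : Pairwise (Disjoint on X)
  reserve_le : ∀ k, b k ≤ p k
  price_eq_reserve : ∀ k, (∀ i, k ∉ X i) → p k = b k

/-- An intermediate state of the ascending auction with increment `e`: every agent who holds items
is satisfied up to `e`. -/
structure IsAuctionState (w : α → Finset κ → ℝ) (b : κ → ℝ) (e : ℝ) (X : α → Finset κ)
    (p : κ → ℝ) : Prop extends IsReserveOutcome b X p where
  almostDemands_of_nonempty : ∀ i, (X i).Nonempty → AlmostDemands (w i) p X e (X i)

/-- A final state of the ascending auction: every agent, with or without items, is satisfied up
to `e`. -/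
structure IsReserveEquilibrium (w : α → Finset κ → ℝ) (b : κ → ℝ) (e : ℝ) (X : α → Finset κ)
    (p : κ → ℝ) : Prop extends IsReserveOutcome b X p where
  almostDemands : ∀ i, AlmostDemands (w i) p X e (X i)

theorem IsReserveEquilibrium.isAuctionState {w : α → Finset κ → ℝ} {b : κ → ℝ} {e : ℝ}
    {X : α → Finset κ} {p : κ → ℝ} (h : IsReserveEquilibrium w b e X p) :
    IsAuctionState w b e X p :=
  ⟨h.toIsReserveOutcome, fun i _ ↦ h.almostDemands i⟩

theorem isAuctionState_empty (w : α → Finset κ → ℝ) (b : κ → ℝ) (e : ℝ) :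
    IsAuctionState w b e (fun _ ↦ ∅) b where
  disjoint _ _ _ := disjoint_empty_left _
  reserve_le _ := le_rfl
  price_eq_reserve _ _ := rfl
  almostDemands_of_nonempty _ h := absurd h not_nonempty_empty

theorem IsAuctionState.price_le {w : α → Finset κ → ℝ} {b : κ → ℝ} {e C : ℝ} {X : α → Finset κ}
    {p : κ → ℝ} (h : IsAuctionState w b e X p) (he : 0 ≤ e) (hw0 : ∀ i, w i ∅ = 0)
    (hb : ∀ k, 0 ≤ b k) (hbC : ∀ k, b k ≤ C) (hwC : ∀ i S, w i S ≤ C) (k : κ) :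
    p k ≤ C + e := by
  by_cases hk : ∀ i, k ∉ X i
  · linarith [h.price_eq_reserve k hk, hbC k]
  · push Not at hk
    obtain ⟨i, hi⟩ := hk
    have individually_rational := h.almostDemands_of_nonempty i ⟨k, hi⟩ ∅ (unsplit_empty X)
    have price_le_payment : p k ≤ ∑ l ∈ X i, p l :=
      single_le_sum (fun l _ ↦ (hb l).trans (h.reserve_le l)) hi
    rw [netValue_empty (hw0 i), netValue] at individually_rational
    linarith [hwC i (X i)]

section Reassign

variable [DecidableEq α] [DecidableEq κ] {X : α → Finset κ} {p : κ → ℝ} {i j : α}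
  {S T : Finset κ} {k t : κ} {e : ℝ}

/-- Agent `j` receives `T`, and every other agent whose bundle meets `T` loses his bundle. -/
def reassign (X : α → Finset κ) (j : α) (T : Finset κ) (i : α) : Finset κ :=
  if i = j then T else if Disjoint (X i) T then X i else ∅

theorem reassign_self (X : α → Finset κ) (j : α) (T : Finset κ) : reassign X j T j = T :=
  if_pos rfl

theorem reassign_of_disjoint (hij : i ≠ j) (hd : Disjoint (X i) T) : reassign X j T i = X i := by
  rw [reassign, if_neg hij, if_pos hd]

theorem reassign_of_not_disjoint (hij : i ≠ j) (hd : ¬Disjoint (X i) T) :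
    reassign X j T i = ∅ := by
  rw [reassign, if_neg hij, if_neg hd]

theorem reassign_subset (hij : i ≠ j) : reassign X j T i ⊆ X i := by
  rw [reassign, if_neg hij]
  split_ifs <;> simp

theorem disjoint_reassign (hij : i ≠ j) : Disjoint (reassign X j T i) T := by
  rw [reassign, if_neg hij]
  split_ifs with hd
  · exact hd
  · exact disjoint_empty_left T

theorem pairwise_disjoint_reassign (hX : Pairwise (Disjoint on X)) (j : α) (T : Finset κ) :
    Pairwise (Disjoint on reassign X j T) := by
  intro i l hil
  rw [onFun]
  rcases eq_or_ne i j with rfl | hij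
  · rw [reassign_self]
    exact (disjoint_reassign hil.symm).symm
  rcases eq_or_ne l j with rfl | hlj
  · rw [reassign_self]
    exact disjoint_reassign hij
  exact (hX hil).mono (reassign_subset hij) (reassign_subset hlj)

theorem subset_or_eq_reassign (hT : Unsplit X T) (hj : X j = ∅) (i : α) :
    X i ⊆ T ∨ reassign X j T i = X i := by
  rcases eq_or_ne i j with rfl | hij
  · exact Or.inl (hj ▸ empty_subset T)
  · exact (hT i).imp_right (reassign_of_disjoint hij)

theorem Unsplit.of_reassign (hT : Unsplit X T) (hj : X j = ∅)
    (hS : Unsplit (reassign X j T) S) : Unsplit X S := by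
  intro i
  rcases subset_or_eq_reassign hT hj i with hi | hi
  · have hTS := hS j
    rw [reassign_self] at hTS
    exact hTS.imp hi.trans fun hd ↦ hd.mono_left hi
  · exact hi ▸ hS i

theorem Unsplit.notMem_of_forall_notMem_reassign (hT : Unsplit X T) (hj : X j = ∅)
    (hk : ∀ i, k ∉ reassign X j T i) (i : α) : k ∉ X i := by
  have hkT : k ∉ T := reassign_self X j T ▸ hk j
  rcases subset_or_eq_reassign hT hj i with hi | hi
  · exact fun hki ↦ hkT (hi hki)
  · exact hi ▸ hk i

theorem netValue_add_single (u : Finset κ → ℝ) (p : κ → ℝ) (t : κ) (e : ℝ) (S : Finset κ) :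
    netValue u (p + Pi.single t e) S = netValue u p S - if t ∈ S then e else 0 := by
  simp only [netValue, Pi.add_apply, sum_add_distrib, sum_pi_single']
  ring

theorem netValue_add_single_le (u : Finset κ → ℝ) (p : κ → ℝ) (t : κ) (he : 0 ≤ e)
    (S : Finset κ) : netValue u (p + Pi.single t e) S ≤ netValue u p S := by
  rw [netValue_add_single]
  split_ifs <;> linarith

theorem IsReserveOutcome.reassign {b : κ → ℝ} (h : IsReserveOutcome b X p) (he : 0 ≤ e)
    (hT : Unsplit X T) (hj : X j = ∅) (ht : t ∈ T) :
    IsReserveOutcome b (reassign X j T) (p + Pi.single t e) where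
  disjoint := pairwise_disjoint_reassign h.disjoint j T
  reserve_le := by
    have hraise : (0 : κ → ℝ) ≤ Pi.single t e := Pi.single_nonneg.2 he
    exact fun k ↦ (h.reserve_le k).trans (le_add_of_nonneg_right (hraise k))
  price_eq_reserve k hk := by
    have hkt : k ≠ t := fun hkt ↦ hk j (by rwa [reassign_self, hkt])
    have hkX := hT.notMem_of_forall_notMem_reassign hj hk
    simp [hkt, h.price_eq_reserve k hkX]

theorem IsAuctionState.reassign {w : α → Finset κ → ℝ} {b : κ → ℝ}
    (h : IsAuctionState w b e X p) (he : 0 ≤ e) (hT : Unsplit X T) (hj : X j = ∅) (ht : t ∈ T)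
    (hmax : ∀ S, Unsplit X S → netValue (w j) p S ≤ netValue (w j) p T) :
    IsAuctionState w b e (reassign X j T) (p + Pi.single t e) := by
  refine ⟨h.toIsReserveOutcome.reassign he hT hj ht, fun i hi S hS ↦ ?_⟩
  have hSX : Unsplit X S := hT.of_reassign hj hS
  have hle := netValue_add_single_le (w i) p t he S
  rcases eq_or_ne i j with rfl | hij
  · rw [reassign_self, netValue_add_single _ _ _ _ T, if_pos ht]
    linarith [hmax S hSX]
  · by_cases hd : Disjoint (X i) T
    · rw [reassign_of_disjoint hij hd] at hi ⊢
      rw [netValue_add_single _ _ _ _ (X i), if_neg (disjoint_right.1 hd ht)]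
      linarith [h.almostDemands_of_nonempty i hi S hSX]
    · exact absurd (reassign_of_not_disjoint hij hd) hi.ne_empty

end Reassign

section Existence

variable {w : α → Finset κ → ℝ} {b : κ → ℝ}

theorem IsAuctionState.exists_sum_price_eq_add [Fintype κ] {e : ℝ} {X : α → Finset κ} {p : κ → ℝ}
    {j : α} (h : IsAuctionState w b e X p) (he : 0 ≤ e) (hj : ¬AlmostDemands (w j) p X e (X j)) :
    ∃ X' p', IsAuctionState w b e X' p' ∧ ∑ k, p' k = ∑ k, p k + e := by
  classical
  have hXj : X j = ∅ := by
    by_contra hne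
    exact hj (h.almostDemands_of_nonempty j (nonempty_iff_ne_empty.2 hne))
  obtain ⟨T, hT, hmax⟩ := Set.exists_max_image {S | Unsplit X S} (netValue (w j) p)
    (Set.toFinite _) ⟨∅, unsplit_empty X⟩
  have hTne : T.Nonempty := by
    rw [nonempty_iff_ne_empty]
    rintro rfl
    exact hj fun S hS ↦ (hmax S hS).trans (by rw [hXj]; linarith)
  obtain ⟨t, ht⟩ := hTne
  refine ⟨_, _, h.reassign he hT hXj ht hmax, ?_⟩
  simp [sum_add_distrib]

theorem exists_isReserveEquilibrium_of_pos [Finite κ] {e C : ℝ} (he : 0 < e)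
    (hw0 : ∀ i, w i ∅ = 0) (hb : ∀ k, 0 ≤ b k) (hbC : ∀ k, b k ≤ C) (hwC : ∀ i S, w i S ≤ C) :
    ∃ X p, IsReserveEquilibrium w b e X p := by
  have := Fintype.ofFinite κ
  let totals : Set ℝ := {r | ∃ X p, IsAuctionState w b e X p ∧ ∑ k, p k = r}
  have htotals : BddAbove totals := by
    refine ⟨∑ _k : κ, (C + e), ?_⟩
    rintro _ ⟨X, p, h, rfl⟩
    exact sum_le_sum fun k _ ↦ h.price_le he.le hw0 hb hbC hwC k
  obtain ⟨_, ⟨X, p, h, rfl⟩, hnear⟩ :=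
    Real.add_neg_lt_sSup (s := totals) ⟨_, _, b, isAuctionState_empty w b e, rfl⟩ (neg_lt_zero.2 he)
  refine ⟨X, p, h.toIsReserveOutcome, fun j ↦ ?_⟩
  by_contra hj
  obtain ⟨X', p', h', hsum⟩ := h.exists_sum_price_eq_add he.le hj
  linarith [le_csSup htotals ⟨X', p', h', rfl⟩]

theorem IsReserveEquilibrium.of_tendsto {τ : Type*} {l : Filter τ} [l.NeBot] {X : α → Finset κ}
    {p : τ → κ → ℝ} {e : τ → ℝ} {p₀ : κ → ℝ} {e₀ : ℝ} (hp : Tendsto p l (𝓝 p₀))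
    (he : Tendsto e l (𝓝 e₀)) (h : ∀ s, IsReserveEquilibrium w b (e s) X (p s)) :
    IsReserveEquilibrium w b e₀ X p₀ := by
  have hpk : ∀ k, Tendsto (fun s ↦ p s k) l (𝓝 (p₀ k)) := tendsto_pi_nhds.1 hp
  have hnet : ∀ i S, Tendsto (fun s ↦ netValue (w i) (p s) S) l (𝓝 (netValue (w i) p₀ S)) :=
    fun i S ↦ tendsto_const_nhds.sub (tendsto_finsetSum S fun k _ ↦ hpk k)
  obtain ⟨s₀⟩ : Nonempty τ := l.nonempty_of_neBot
  refine ⟨⟨(h s₀).disjoint, fun k ↦ ?_, fun k hk ↦ ?_⟩, fun i S hS ↦ ?_⟩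
  · exact ge_of_tendsto' (hpk k) fun s ↦ (h s).reserve_le k
  · refine tendsto_nhds_unique (hpk k) ?_
    simp only [(h _).price_eq_reserve k hk, tendsto_const_nhds]
  · exact le_of_tendsto_of_tendsto' (hnet i S) ((hnet i (X i)).add he) fun s ↦
      (h s).almostDemands i S hS

theorem exists_isReserveEquilibrium [Finite α] [Finite κ] (hw0 : ∀ i, w i ∅ = 0)
    (hb : ∀ k, 0 ≤ b k) : ∃ X p, IsReserveEquilibrium w b 0 X p := by
  obtain ⟨C, hC⟩ := ((Set.finite_range b).union (Set.finite_range (uncurry w))).bddAbove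
  have hbC : ∀ k, b k ≤ C := fun k ↦ hC (Or.inl ⟨k, rfl⟩)
  have hwC : ∀ i S, w i S ≤ C := fun i S ↦ hC (Or.inr ⟨(i, S), rfl⟩)
  have hbounded : ∀ᶠ e in 𝓝[>] (0 : ℝ), ∃ X, ∃ p ∈ Set.Icc 0 (fun _ : κ ↦ C + 1),
      IsReserveEquilibrium w b e X p := by
    filter_upwards [Ioc_mem_nhdsGT one_pos] with e he
    obtain ⟨X, p, h⟩ := exists_isReserveEquilibrium_of_pos he.1 hw0 hb hbC hwC
    refine ⟨X, p, ⟨fun k ↦ (hb k).trans (h.reserve_le k), fun k ↦ ?_⟩, h⟩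
    have := h.isAuctionState.price_le he.1.le hw0 hb hbC hwC k
    exact this.trans (add_le_add_right he.2 C)
  obtain ⟨X, hX⟩ := frequently_exists.1 hbounded.frequently
  obtain ⟨e, he, hp⟩ := exists_seq_forall_of_frequently hX
  choose p hpC hpeq using hp
  obtain ⟨p₀, -, φ, hφ, hlim⟩ := isCompact_Icc.tendsto_subseq hpC
  have he₀ : Tendsto e atTop (𝓝 0) := he.mono_right nhdsWithin_le_nhds
  exact ⟨X, p₀, .of_tendsto hlim (he₀.comp hφ.tendsto_atTop) fun m ↦ hpeq (φ m)⟩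

end Existence

theorem sum_netValue_add_sum_sold [Fintype α] [DecidableEq κ] [Fintype κ] {X : α → Finset κ}
    (hX : Pairwise (Disjoint on X)) (w : α → Finset κ → ℝ) (p : κ → ℝ) :
    ∑ i, netValue (w i) p (X i) + ∑ k, (if k ∈ univ.biUnion X then p k else 0) =
      ∑ i, w i (X i) := by
  have hsold : ∑ k ∈ univ.biUnion X, p k = ∑ i, ∑ k ∈ X i, p k := sum_biUnion (hX.set_pairwise _)
  rw [sum_ite_mem, univ_inter, hsold, ← sum_add_distrib]
  simp only [netValue, sub_add_cancel]

theorem IsReserveEquilibrium.sum_reserve_le_welfare [Fintype α] {w : α → Finset α → ℝ}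
    {b : α → ℝ} {X : α → Finset α} {p : α → ℝ} (h : IsReserveEquilibrium w b 0 X p)
    (hw0 : ∀ i, w i ∅ = 0) (hwb : ∀ i, 2 * b i ≤ max 0 (w i {i})) :
    ∑ i, b i ≤ ∑ i, w i (X i) := by
  classical
  rw [← sum_netValue_add_sum_sold h.disjoint w p, ← sum_add_distrib]
  refine sum_le_sum fun i _ ↦ ?_
  have hnonneg : 0 ≤ netValue (w i) p (X i) := by
    simpa only [netValue_empty (hw0 i), add_zero] using h.almostDemands i ∅ (unsplit_empty X)
  split_ifs with hi
  · linarith [h.reserve_le i]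
  · have hunsold : ∀ j, i ∉ X j := by simpa using hi
    have hbuy := h.almostDemands i {i} (unsplit_singleton hunsold)
    rw [netValue, sum_singleton, h.price_eq_reserve i hunsold] at hbuy
    rcases le_max_iff.1 (hwb i) with hbi | hbi <;> linarith

end Auction

section Bundles

variable {ι : Type} [Fintype ι] [DecidableEq ι] {n : ℕ} {v : Fin n → Finset ι → ℝ}
  {X : Fin n → Finset ι}

theorem IsAlloc.eq_of_apply_eq (hX : IsAlloc X) {i j : Fin n} (hij : X i = X j) (hi : X i ≠ ∅) :
    i = j := by
  by_contra hne
  have hd := hX i j hne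
  rw [← hij, disjoint_self_iff_empty] at hd
  exact hi hd

theorem IsAlloc.extend_apply (hX : IsAlloc X) (q : Fin n → ℝ) (r : Finset ι → ℝ) {i : Fin n}
    (hi : X i ≠ ∅) : extend X q r (X i) = q i := by
  classical
  have hex : ∃ j, X j = X i := ⟨i, rfl⟩
  have hchoose : i = hex.choose := hX.eq_of_apply_eq hex.choose_spec.symm hi
  rw [extend_def, dif_pos hex]
  exact congrArg q hchoose.symm

theorem util_image_eq (hX : IsAlloc X) {u P : Finset ι → ℝ} {q : Fin n → ℝ} {J : Finset (Fin n)}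
    (hJ : ∀ j ∈ J, X j ≠ ∅) (hP : ∀ j ∈ J, P (X j) = q j) :
    util u P (J.image X) = u (J.biUnion X) - ∑ j ∈ J, q j := by
  have hinj : Set.InjOn X J := fun i hi j _ hij ↦ hX.eq_of_apply_eq hij (hJ i hi)
  rw [util, sum_image hinj, sum_congr rfl hP, sup_image, id_comp, sup_eq_biUnion]

theorem IsAlloc.exists_isCWE (hX : IsAlloc X) (hv0 : ∀ i, v i ∅ = 0) {q : Fin n → ℝ}
    (hq : ∀ i, 0 ≤ q i)
    (hdemand : ∀ i (J : Finset (Fin n)),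
      v i (J.biUnion X) - ∑ j ∈ J, q j ≤ v i (X i) - q i) :
    ∃ P, IsCWE v X P := by
  obtain ⟨C, hC⟩ := ((Set.finite_range (uncurry v)).insert 0).bddAbove
  have hvC : ∀ i S, v i S ≤ C := fun i S ↦ hC (Or.inr ⟨(i, S), rfl⟩)
  -- The unallocated bundle gets a price that no agent gains by paying.
  let P : Finset ι → ℝ := extend X q fun _ ↦ C
  have hPX : ∀ i, X i ≠ ∅ → P (X i) = q i := fun i hi ↦ hX.extend_apply q _ hi
  have hPC : ∀ B, (¬∃ i, X i = B) → P B = C := fun B hB ↦ extend_apply' q _ B hB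
  have hP : ∀ B ∈ Bundles X, 0 ≤ P B := by
    intro B hB
    by_cases hrange : ∃ i, X i = B
    · obtain ⟨i, rfl⟩ := hrange
      exact hPX i (ne_of_mem_erase hB) ▸ hq i
    · exact hPC B hrange ▸ hC (Or.inl rfl)
  have hown : ∀ i, v i (X i) - q i ≤ util (v i) P (own X i) := by
    intro i
    unfold own
    split_ifs with hi
    · simp [util, hi, hv0, hq]
    · simp [util, hPX i hi]
  refine ⟨P, hX, hP, fun i S hS ↦ le_trans ?_ (hown i)⟩
  by_cases hrange : S ⊆ univ.image X
  · obtain ⟨J, -, rfl⟩ := subset_image_iff.1 hrange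
    have hJ : ∀ j ∈ J, X j ≠ ∅ := fun j hj ↦ ne_of_mem_erase (hS (mem_image_of_mem X hj))
    rw [util_image_eq hX hJ fun j hj ↦ hPX j (hJ j hj)]
    exact hdemand i J
  · obtain ⟨B, hBS, hB⟩ := not_subset.1 hrange
    have hCS : C ≤ ∑ B ∈ S, P B := by
      rw [← hPC B (by simpa using hB)]
      exact single_le_sum (fun B' hB' ↦ hP B' (hS hB')) hBS
    have hnonneg : 0 ≤ v i (X i) - q i := by simpa [hv0] using hdemand i ∅
    rw [util]
    linarith [hvC i (S.sup id)]

theorem isAlloc_biUnion {κ : Type*} {Y : κ → Finset ι} {A : Fin n → Finset κ}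
    (hY : Pairwise (Disjoint on Y)) (hA : Pairwise (Disjoint on A)) :
    IsAlloc fun i ↦ (A i).biUnion Y := by
  intro i j hij
  simp only [disjoint_biUnion_left, disjoint_biUnion_right]
  exact fun k hk l hl ↦ hY (disjoint_iff_ne.1 (hA hij) l hl k hk)

theorem IsReserveEquilibrium.exists_isCWE {κ : Type*} {Y : κ → Finset ι} {A : Fin n → Finset κ}
    {b p : κ → ℝ} (h : IsReserveEquilibrium (fun i S ↦ v i (S.biUnion Y)) b 0 A p)
    (hY : Pairwise (Disjoint on Y)) (hv0 : ∀ i, v i ∅ = 0) (hb : ∀ k, 0 ≤ b k) :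
    ∃ P, IsCWE v (fun i ↦ (A i).biUnion Y) P := by
  classical
  have hp : ∀ k, 0 ≤ p k := fun k ↦ (hb k).trans (h.reserve_le k)
  refine (isAlloc_biUnion hY h.disjoint).exists_isCWE hv0
    (q := fun i ↦ ∑ k ∈ A i, p k) (fun i ↦ sum_nonneg fun k _ ↦ hp k) fun i J ↦ ?_
  rw [← biUnion_biUnion, ← sum_biUnion (h.disjoint.set_pairwise _)]
  simpa only [netValue, add_zero] using h.almostDemands i _ (unsplit_biUnion h.disjoint J)

end Bundles

theorem cwe_half_welfare_of_allocation_general {ι : Type} [Fintype ι] [DecidableEq ι] (n : ℕ)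
    (v : Fin n → Finset ι → ℝ) (hv0 : ∀ i, v i ∅ = 0)
    (Y : Fin n → Finset ι) (hY : IsAlloc Y) :
    ∃ (X : Fin n → Finset ι) (p : Finset ι → ℝ),
      IsCWE v X p ∧ SW v X ≥ (1 / 2) * SW v Y := by
  let w : Fin n → Finset (Fin n) → ℝ := fun i S ↦ v i (S.biUnion Y)
  let b : Fin n → ℝ := fun k ↦ max 0 (v k (Y k)) / 2
  have hw0 : ∀ i, w i ∅ = 0 := fun i ↦ by simp only [w, biUnion_empty, hv0]
  have hb : ∀ k, 0 ≤ b k := fun k ↦ by positivity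
  have hwb : ∀ i, 2 * b i ≤ max 0 (w i {i}) := fun i ↦ by
    simp only [w, b, singleton_biUnion, mul_div_cancel₀ _ (two_ne_zero' ℝ), le_refl]
  have hYb : ∀ i, (1 / 2) * v i (Y i) ≤ b i := fun i ↦ by
    simp only [b]
    linarith [le_max_right 0 (v i (Y i))]
  obtain ⟨A, p, h⟩ := exists_isReserveEquilibrium hw0 hb
  obtain ⟨P, hP⟩ := h.exists_isCWE (fun i j hij ↦ hY i j hij) hv0 hb
  refine ⟨_, P, hP, ?_⟩
  calc (1 / 2) * SW v Y = ∑ i, (1 / 2) * v i (Y i) := mul_sum _ _ _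
    _ ≤ ∑ i, b i := sum_le_sum fun i _ ↦ hYb i
    _ ≤ SW v fun i ↦ (A i).biUnion Y := h.sum_reserve_le_welfare hw0 hwb

/-- For every auction with nonnegative, monotone, normalized valuations, and for
every allocation `Y`, there exists a CWE `(X, p)` with `SW(X) ≥ (1/2)·SW(Y)`. -/
theorem cwe_half_welfare_of_allocation {ι : Type} [Fintype ι] [DecidableEq ι] (n : ℕ)
    (v : Fin n → Finset ι → ℝ) (hv : ∀ i, ValidVal (v i))
    (Y : Fin n → Finset ι) (hY : IsAlloc Y) :
    ∃ (X : Fin n → Finset ι) (p : Finset ι → ℝ),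
      IsCWE v X p ∧ SW v X ≥ (1 / 2) * SW v Y :=
  cwe_half_welfare_of_allocation_general n v (fun i ↦ (hv i).2.2) Y hY
end

section
/- Fix ε > 0 and consider the auction with item set M = {1,2,3} and agents 1,2,3, where agent i's valuation is v_i(S) = 2+ε if M\{i} ⊆ S, v_i(S) = 1 if i ∈ S and M\{i} ⊄ S, and v_i(S) = 0 otherwise. Then every Combinatorial Walrasian Equilibrium (X, p) of this auction satisfies SW(X) ≤ 2+ε, while the allocation assigning item i to agent i has social welfare 3. Hence no CWE of this auction attains more than a (2+ε)/3 fraction of the optimal social welfare. -/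
open Finset

/-!
In a CWE, agent `i` does not prefer the bundles of all the other agents to his own. Summed over the
`n` agents, this bounds the total value of these unions of bundles by the social welfare plus
`n - 2` times the total price, and individual rationality bounds the total price by the social
welfare. If agent `i` values the items other than `i` at `a > n - 1`, the allocation of item `i` to
agent `i` violates the resulting bound `n * a ≤ (n - 1) * n`. Every other allocation has welfare at
most `a`: either some agent gets the items he values at `a`, leaving nothing of value to the others,
or all values are at most `1` and one of them vanishes.
-/

section Equilibrium

variable {ι : Type} [Fintype ι] [DecidableEq ι] {n : ℕ} {v : Fin n → Finset ι → ℝ}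
  {X : Fin n → Finset ι} {p : Finset ι → ℝ}

/-- The payment of agent `i` at bundle prices `p`. Summing over `own X i` makes it vanish for an
agent with an empty bundle, whatever the value of `p ∅`. -/
def payment (X : Fin n → Finset ι) (p : Finset ι → ℝ) (i : Fin n) : ℝ :=
  ∑ B ∈ own X i, p B

theorem own_subset_bundles (X : Fin n → Finset ι) (i : Fin n) : own X i ⊆ Bundles X := by
  unfold own
  split_ifs with hi
  · exact empty_subset _
  · simp [Bundles, hi]

theorem sup_own (X : Fin n → Finset ι) (i : Fin n) : (own X i).sup id = X i := by
  unfold own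
  split_ifs with hi <;> simp [hi]

theorem util_own (u : Finset ι → ℝ) (X : Fin n → Finset ι) (p : Finset ι → ℝ) (i : Fin n) :
    util u p (own X i) = u (X i) - payment X p i := by
  rw [util, sup_own, payment]

theorem IsAlloc.disjoint_own (hX : IsAlloc X) {i j : Fin n} (hij : i ≠ j) :
    Disjoint (own X i) (own X j) := by
  unfold own
  split_ifs with hi hj
  · exact disjoint_empty_left _
  · exact disjoint_empty_left _
  · exact disjoint_empty_right _
  · exact disjoint_singleton.mpr ((hX i j hij).ne hi)

theorem IsAlloc.util_biUnion_own (hX : IsAlloc X) (u : Finset ι → ℝ) (p : Finset ι → ℝ)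
    (T : Finset (Fin n)) :
    util u p (T.biUnion (own X)) = u (T.sup X) - ∑ j ∈ T, payment X p j := by
  have sup_eq : (T.biUnion (own X)).sup id = T.sup X := by
    simp only [sup_biUnion, sup_own]
  rw [util, sup_eq, sum_biUnion fun _ _ _ _ hij => hX.disjoint_own hij]
  rfl

theorem IsCWE.value_sup_sub_payments_le (h : IsCWE v X p) (i : Fin n) (T : Finset (Fin n)) :
    v i (T.sup X) - ∑ j ∈ T, payment X p j ≤ v i (X i) - payment X p i := by
  obtain ⟨alloc, -, optimal⟩ := h
  rw [← alloc.util_biUnion_own, ← util_own]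
  exact optimal i _ (biUnion_subset.mpr fun j _ => own_subset_bundles X j)

theorem IsCWE.payment_le_value (h : IsCWE v X p) {i : Fin n} (hv : 0 ≤ v i ∅) :
    payment X p i ≤ v i (X i) := by
  have := h.value_sup_sub_payments_le i ∅
  simp only [sup_empty, bot_eq_empty, sum_empty] at this
  linarith

theorem IsCWE.sum_payment_le_SW (h : IsCWE v X p) (hv : ∀ i, 0 ≤ v i ∅) :
    ∑ i, payment X p i ≤ SW v X :=
  sum_le_sum fun i _ => h.payment_le_value (hv i)

theorem IsCWE.sum_value_others_le (h : IsCWE v X p) (hn : 2 ≤ n) (hv : ∀ i, 0 ≤ v i ∅) :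
    ∑ i, v i ((univ.erase i).sup X) ≤ (n - 1) * SW v X := by
  set P := ∑ i, payment X p i with hP
  have hn' : (0 : ℝ) ≤ n - 2 := by
    rw [sub_nonneg]
    exact_mod_cast hn
  have value_others_le (i : Fin n) :
      v i ((univ.erase i).sup X) ≤ v i (X i) + P - 2 * payment X p i := by
    have no_deviation := h.value_sup_sub_payments_le i (univ.erase i)
    rw [sum_erase_eq_sub (mem_univ i)] at no_deviation
    linarith
  calc ∑ i, v i ((univ.erase i).sup X)
      ≤ ∑ i, (v i (X i) + P - 2 * payment X p i) := sum_le_sum fun i _ => value_others_le i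
    _ = SW v X + (n - 2) * P := by
      rw [sum_sub_distrib, sum_add_distrib, ← mul_sum, ← hP, sum_const, card_univ,
        Fintype.card_fin, nsmul_eq_mul, SW]
      ring
    _ ≤ SW v X + (n - 2) * SW v X := by
      gcongr
      exact h.sum_payment_le_SW hv
    _ = (n - 1) * SW v X := by ring

end Equilibrium

section ComplementVal

variable {n : ℕ} {a : ℝ} {i j : Fin n} {S : Finset (Fin n)} {X : Fin n → Finset (Fin n)}
  {p : Finset (Fin n) → ℝ}

/-- The valuations of the gap example, with `n` items and `n` agents: agent `i` values all items but
item `i` at `a`, and item `i` at `1`. The auction of the theorem is `n = 3`, `a = 2 + ε`. -/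
def complementVal (a : ℝ) (i : Fin n) (S : Finset (Fin n)) : ℝ :=
  if univ.erase i ⊆ S then a else if i ∈ S then 1 else 0

theorem not_erase_subset_of_notMem (hij : j ≠ i) (hj : j ∉ S) : ¬ univ.erase i ⊆ S :=
  fun h => hj (h (mem_erase.mpr ⟨hij, mem_univ j⟩))

theorem complementVal_of_erase_subset (h : univ.erase i ⊆ S) : complementVal a i S = a :=
  if_pos h

theorem complementVal_of_mem (h : ¬ univ.erase i ⊆ S) (hi : i ∈ S) : complementVal a i S = 1 := by
  rw [complementVal, if_neg h, if_pos hi]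

theorem complementVal_of_notMem (h : ¬ univ.erase i ⊆ S) (hi : i ∉ S) :
    complementVal a i S = 0 := by
  rw [complementVal, if_neg h, if_neg hi]

theorem complementVal_nonneg (ha : 0 ≤ a) : 0 ≤ complementVal a i S := by
  unfold complementVal
  split_ifs <;> positivity

theorem complementVal_le_one (h : ¬ univ.erase i ⊆ S) : complementVal a i S ≤ 1 := by
  rw [complementVal, if_neg h]
  split_ifs <;> norm_num

theorem complementVal_eq_zero_of_disjoint (hn : 3 ≤ n) (hS : univ.erase i ⊆ S) (hji : j ≠ i)
    {T : Finset (Fin n)} (hST : Disjoint S T) : complementVal a j T = 0 := by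
  have notMem_of_ne {k : Fin n} (hki : k ≠ i) : k ∉ T :=
    disjoint_left.mp hST (hS (mem_erase.mpr ⟨hki, mem_univ k⟩))
  obtain ⟨k, hki, hkj⟩ := Fin.exists_ne_and_ne_of_two_lt i j hn
  exact complementVal_of_notMem (not_erase_subset_of_notMem hkj (notMem_of_ne hki))
    (notMem_of_ne hji)

theorem SW_complementVal_singleton (hn : 2 ≤ n) :
    SW (complementVal a) (fun i : Fin n => {i}) = n := by
  have : Nontrivial (Fin n) := Fin.nontrivial_iff_two_le.mpr hn
  have value_eq_one (i : Fin n) : complementVal a i {i} = 1 := by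
    obtain ⟨j, hji⟩ := exists_ne i
    exact complementVal_of_mem (not_erase_subset_of_notMem hji (notMem_singleton.mpr hji))
      (mem_singleton_self i)
  simp [SW, value_eq_one]

theorem IsAlloc.SW_complementVal_of_erase_subset (hX : IsAlloc X) (hn : 3 ≤ n)
    (hi : univ.erase i ⊆ X i) : SW (complementVal a) X = a := by
  have others_zero (j : Fin n) (hji : j ≠ i) : complementVal a j (X j) = 0 :=
    complementVal_eq_zero_of_disjoint hn hi hji (hX i j hji.symm)
  rw [SW, Fintype.sum_eq_single i others_zero, complementVal_of_erase_subset hi]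

theorem SW_complementVal_le_of_notMem (hX : ∀ j, ¬ univ.erase j ⊆ X j) (hi : i ∉ X i) :
    SW (complementVal a) X ≤ n - 1 :=
  calc SW (complementVal a) X
      = ∑ j ∈ univ.erase i, complementVal a j (X j) :=
        (sum_erase univ (f := fun j => complementVal a j (X j))
          (complementVal_of_notMem (hX i) hi)).symm
    _ ≤ ∑ _j ∈ univ.erase i, 1 := sum_le_sum fun j _ => complementVal_le_one (hX j)
    _ = n - 1 := by rw [sum_erase_eq_sub (mem_univ i)]; simp

theorem IsAlloc.eq_singleton_of_forall_mem (hX : IsAlloc X) (mem_own : ∀ i, i ∈ X i) :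
    X = fun i => {i} := by
  funext i
  refine eq_singleton_iff_unique_mem.mpr ⟨mem_own i, fun j hj => ?_⟩
  by_contra hji
  exact disjoint_left.mp (hX j i hji) (mem_own j) hj

theorem not_isCWE_complementVal_singleton (hn : 2 ≤ n) (ha : n - 1 < a) :
    ¬ IsCWE (complementVal a) (fun i : Fin n => {i}) p := by
  intro h
  have hn' : (2 : ℝ) ≤ n := by exact_mod_cast hn
  have value_others (i : Fin n) : complementVal a i (univ.erase i) = a :=
    complementVal_of_erase_subset Subset.rfl
  have bound : n * a ≤ (n - 1) * n := by
    simpa [value_others, SW_complementVal_singleton hn]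
      using h.sum_value_others_le hn fun i => complementVal_nonneg (by linarith)
  nlinarith

theorem IsCWE.exists_notMem_of_complementVal (h : IsCWE (complementVal a) X p) (hn : 2 ≤ n)
    (ha : n - 1 < a) : ∃ i, i ∉ X i := by
  by_contra! mem_own
  obtain rfl := h.1.eq_singleton_of_forall_mem mem_own
  exact not_isCWE_complementVal_singleton hn ha h

end ComplementVal

theorem cwe_gap_lower_bound_general {n : ℕ} (hn : 3 ≤ n) {a : ℝ} (ha : n - 1 < a) :
    (∀ (X : Fin n → Finset (Fin n)) (p : Finset (Fin n) → ℝ),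
        IsCWE (complementVal a) X p → SW (complementVal a) X ≤ a) ∧
      SW (complementVal a) (fun i : Fin n => {i}) = n := by
  refine ⟨fun X p h => ?_, SW_complementVal_singleton (by lia)⟩
  by_cases hX : ∃ i, univ.erase i ⊆ X i
  · obtain ⟨i, hi⟩ := hX
    exact (h.1.SW_complementVal_of_erase_subset hn hi).le
  · push Not at hX
    obtain ⟨i, hi⟩ := h.exists_notMem_of_complementVal (by lia) ha
    exact (SW_complementVal_le_of_notMem hX hi).trans ha.le

/-- In the 3-item, 3-agent market where agent `i` values `M \ {i}` at `2 + ε`,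
any set containing `i` (but not `M \ {i}`) at `1`, and anything else at `0`, every CWE has
social welfare at most `2 + ε`, while allocating item `i` to agent `i` yields welfare `3`. -/
theorem cwe_gap_lower_bound (ε : ℝ) (hε : 0 < ε)
    (v : Fin 3 → Finset (Fin 3) → ℝ)
    (hv : ∀ (i : Fin 3) (S : Finset (Fin 3)),
      v i S = if Finset.univ.erase i ⊆ S then 2 + ε else if i ∈ S then 1 else 0) :
    (∀ (X : Fin 3 → Finset (Fin 3)) (p : Finset (Fin 3) → ℝ),
        IsCWE v X p → SW v X ≤ 2 + ε) ∧
      SW v (fun i => {i}) = 3 := by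
  obtain rfl : v = complementVal (2 + ε) := funext₂ hv
  exact_mod_cast cwe_gap_lower_bound_general le_rfl (a := 2 + ε) (by norm_num; linarith)
end

section
/- Fix m ≥ 2 and 0 < ε < m−1, and consider the auction with m items and two agents, where agent 1 is unit-demand with v_1(S) = 1+ε for every nonempty S ⊆ M and v_1(∅) = 0, and agent 2 is single-minded with v_2(M) = m and v_2(S) = 0 for every S ≠ M. Then every stable item-priced outcome (X, p) satisfies SW(X) ≤ 1+ε, while the optimal social welfare over all allocations equals m. Hence no stable item pricing attains more than a (1+ε)/m fraction of the optimal social welfare. -/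
open Finset

/-- A stable item-priced outcome: an allocation together with nonnegative item prices such that
every agent's bundle maximizes his quasilinear utility over all subsets of items. -/
def IsStableItemPricing {ι : Type} [Fintype ι] [DecidableEq ι] {n : ℕ}
    (v : Fin n → Finset ι → ℝ) (X : Fin n → Finset ι) (p : ι → ℝ) : Prop :=
  IsAlloc X ∧ (∀ j, 0 ≤ p j) ∧
    ∀ i : Fin n, ∀ S : Finset ι,
      v i S - ∑ j ∈ S, p j ≤ v i (X i) - ∑ j ∈ X i, p j

/-!
In a stable item-priced outcome an agent finds no item outside their bundle cheaper than its
marginal value, while the owner of a bundle pays at most what the bundle adds to the empty one.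
Hence if the single-minded agent holds all `m` items, the unit-demand agent holds nothing, every
item costs at least `1 + ε`, and the grand bundle costs at least `m * (1 + ε)`, more than its
value `m`. So the single-minded agent gets no value, and the welfare comes from the unit-demand
agent alone.
-/

section StableOutcomes

variable {ι : Type} [Fintype ι] [DecidableEq ι] {n : ℕ} {v : Fin n → Finset ι → ℝ}
  {X : Fin n → Finset ι} {p : ι → ℝ} {i j : Fin n}

theorem IsAlloc.eq_empty_of_eq_univ (hX : IsAlloc X) (hij : i ≠ j) (hj : X j = univ) :
    X i = ∅ := by
  have hdisj := hX i j hij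
  rwa [hj, ← Finset.top_eq_univ, disjoint_top] at hdisj

namespace IsStableItemPricing

theorem marginal_le_price (h : IsStableItemPricing v X p) {k : ι} (hk : k ∉ X i) :
    v i (insert k (X i)) - v i (X i) ≤ p k := by
  have hdeviate := h.2.2 i (insert k (X i))
  rw [sum_insert hk] at hdeviate
  linarith

theorem sum_price_le (h : IsStableItemPricing v X p) (j : Fin n) :
    ∑ k ∈ X j, p k ≤ v j (X j) - v j ∅ := by
  have hdeviate := h.2.2 j ∅
  rw [sum_empty] at hdeviate
  linarith

theorem sum_marginal_le (h : IsStableItemPricing v X p) (hij : i ≠ j) :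
    ∑ k ∈ X j, (v i (insert k (X i)) - v i (X i)) ≤ v j (X j) - v j ∅ :=
  calc ∑ k ∈ X j, (v i (insert k (X i)) - v i (X i))
      ≤ ∑ k ∈ X j, p k := sum_le_sum fun _ hk =>
        h.marginal_le_price (disjoint_right.mp (h.1 i j hij) hk)
    _ ≤ v j (X j) - v j ∅ := h.sum_price_le j

end IsStableItemPricing

end StableOutcomes

/-- The valuation of a unit-demand agent for whom all items are interchangeable: any nonempty
bundle is worth `a`. -/
def uniformUnitDemand {ι : Type} [DecidableEq ι] (a : ℝ) (S : Finset ι) : ℝ :=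
  if S = ∅ then 0 else a

theorem uniformUnitDemand_le {ι : Type} [DecidableEq ι] {a : ℝ} (ha : 0 ≤ a)
    (S : Finset ι) : uniformUnitDemand a S ≤ a := by
  unfold uniformUnitDemand
  split_ifs <;> simp [ha]

/-- The valuation of an agent who is single-minded about the grand bundle: the set of all items is
worth `b`, and any other bundle is worthless. -/
def grandBundleMinded {ι : Type} [Fintype ι] [DecidableEq ι] (b : ℝ) (S : Finset ι) : ℝ :=
  if S = univ then b else 0

/-- The two-agent auction exhibiting the welfare gap of item pricing: agent `0` (the paper's
agent 1) is unit-demand with value `a`, and agent `1` (the paper's agent 2) is single-minded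
about the grand bundle with value `b`. -/
def gapAuction {ι : Type} [Fintype ι] [DecidableEq ι] (a b : ℝ) : Fin 2 → Finset ι → ℝ :=
  ![uniformUnitDemand a, grandBundleMinded b]

section GapAuction

variable {ι : Type} [Fintype ι] [DecidableEq ι] {a b : ℝ} {X : Fin 2 → Finset ι} {p : ι → ℝ}

theorem grandBundleMinded_nonneg (hb : 0 ≤ b) (S : Finset ι) : 0 ≤ grandBundleMinded b S := by
  unfold grandBundleMinded
  split_ifs <;> simp [hb]

theorem sw_gapAuction (a b : ℝ) (X : Fin 2 → Finset ι) :
    SW (gapAuction a b) X = uniformUnitDemand a (X 0) + grandBundleMinded b (X 1) := by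
  simp [SW, gapAuction]

theorem sw_gapAuction_of_eq_univ (hX : IsAlloc X) (h : X 1 = univ) :
    SW (gapAuction a b) X = b := by
  have hempty : X 0 = ∅ := hX.eq_empty_of_eq_univ zero_ne_one h
  simp [sw_gapAuction, uniformUnitDemand, grandBundleMinded, h, hempty]

theorem sw_gapAuction_le_of_ne_univ (ha : 0 ≤ a) (h : X 1 ≠ univ) :
    SW (gapAuction a b) X ≤ a := by
  rw [sw_gapAuction, grandBundleMinded, if_neg h, add_zero]
  exact uniformUnitDemand_le ha _

theorem IsStableItemPricing.card_mul_le_of_gapAuction_eq_univ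
    (h : IsStableItemPricing (gapAuction a b) X p) (hb : 0 ≤ b) (huniv : X 1 = univ) :
    Fintype.card ι * a ≤ b := by
  have hempty : X 0 = ∅ := h.1.eq_empty_of_eq_univ zero_ne_one huniv
  have hmarginal : Fintype.card ι * a ≤ b - grandBundleMinded b (∅ : Finset ι) := by
    simpa [gapAuction, uniformUnitDemand, grandBundleMinded, huniv, hempty] using
      h.sum_marginal_le zero_ne_one
  linarith [grandBundleMinded_nonneg hb (∅ : Finset ι)]

theorem IsStableItemPricing.sw_gapAuction_le (h : IsStableItemPricing (gapAuction a b) X p)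
    (ha : 0 ≤ a) (hb : 0 ≤ b) (hlt : b < Fintype.card ι * a) : SW (gapAuction a b) X ≤ a :=
  sw_gapAuction_le_of_ne_univ ha fun huniv =>
    (h.card_mul_le_of_gapAuction_eq_univ hb huniv).not_gt hlt

theorem sw_gapAuction_le (ha : 0 ≤ a) (hab : a ≤ b) (hX : IsAlloc X) :
    SW (gapAuction a b) X ≤ b := by
  by_cases huniv : X 1 = univ
  · exact (sw_gapAuction_of_eq_univ hX huniv).le
  · exact (sw_gapAuction_le_of_ne_univ ha huniv).trans hab

theorem isAlloc_empty_univ : IsAlloc ![(∅ : Finset ι), univ] := by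
  simp [IsAlloc, Fin.forall_fin_two]

theorem isGreatest_sw_gapAuction (ha : 0 ≤ a) (hab : a ≤ b) :
    IsGreatest {w : ℝ | ∃ Z : Fin 2 → Finset ι, IsAlloc Z ∧ SW (gapAuction a b) Z = w} b := by
  refine ⟨⟨_, isAlloc_empty_univ, sw_gapAuction_of_eq_univ isAlloc_empty_univ rfl⟩, ?_⟩
  rintro _ ⟨Z, hZ, rfl⟩
  exact sw_gapAuction_le ha hab hZ

theorem item_pricing_gap_single_minded_general (ha : 0 ≤ a) (hab : a ≤ b)
    (hlt : b < Fintype.card ι * a) :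
    (∀ (X : Fin 2 → Finset ι) (p : ι → ℝ),
        IsStableItemPricing (gapAuction a b) X p → SW (gapAuction a b) X ≤ a) ∧
      IsGreatest {w : ℝ | ∃ Z : Fin 2 → Finset ι, IsAlloc Z ∧ SW (gapAuction a b) Z = w} b :=
  ⟨fun _ _ h => h.sw_gapAuction_le ha (ha.trans hab) hlt, isGreatest_sw_gapAuction ha hab⟩

end GapAuction

/-- With a unit-demand agent valuing any nonempty set at `1 + ε` and a
single-minded agent valuing the grand bundle at `m`, every stable item-priced outcome has
welfare at most `1 + ε`, while the optimal welfare over all allocations equals `m`. -/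
theorem item_pricing_gap_single_minded (m : ℕ) (hm : 2 ≤ m) (ε : ℝ) (hε : 0 < ε)
    (hε' : ε < (m : ℝ) - 1)
    (v : Fin 2 → Finset (Fin m) → ℝ)
    (hv1 : ∀ S : Finset (Fin m), v 0 S = if S = ∅ then 0 else 1 + ε)
    (hv2 : ∀ S : Finset (Fin m), v 1 S = if S = Finset.univ then (m : ℝ) else 0) :
    (∀ (X : Fin 2 → Finset (Fin m)) (p : Fin m → ℝ),
        IsStableItemPricing v X p → SW v X ≤ 1 + ε) ∧
      IsGreatest {w : ℝ | ∃ Z : Fin 2 → Finset (Fin m), IsAlloc Z ∧ SW v Z = w} (m : ℝ) := by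
  obtain rfl : v = gapAuction (1 + ε) m :=
    funext (Fin.forall_fin_two.mpr ⟨funext hv1, funext hv2⟩)
  exact item_pricing_gap_single_minded_general (by positivity) (by linarith) <| by
    simpa using lt_mul_of_one_lt_right (by positivity : (0 : ℝ) < m) (by linarith : 1 < 1 + ε)
end

section
/- Fix m ≥ 4 and 0 < δ < 1/(2(m−1)), and consider the auction with m items and two agents, where agent 1 is unit-demand with v_1(S) = 1/2 − δ for every nonempty S and v_1(∅) = 0, and agent 2 has the fractionally subadditive valuation v_2(S) = max(1, |S|/2) for nonempty S and v_2(∅) = 0. Then every stable item-priced outcome (X, p) allocates at most two items in total (|X_1| + |X_2| ≤ 2) and satisfies SW(X) ≤ 3/2 − δ, while the optimal social welfare over all allocations equals m/2. Hence the welfare loss of stable item pricing is linear in m. -/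
open Finset

/-!
If the unit-demand agent wins an item, that item costs less than `1/2`. For the other agent an extra
item is worth `1/2` as soon as he holds two, so he holds at most one. A second item held by the
unit-demand agent is worthless to him, so all his items would be free, and the other agent would
take them. If the unit-demand agent wins nothing, every item costs at least `1/2 - δ`; this is so
close to `1/2` that three or more items are less profitable than a single one, which already has
value `1`.
-/

section Demand

/-- The bundle `S` lies in the demand correspondence of an agent with valuation `v` at item
prices `p`, that is, it maximizes the agent's quasilinear utility. -/
def IsDemanded {ι : Type*} (v : Finset ι → ℝ) (p : ι → ℝ) (S : Finset ι) : Prop :=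
  ∀ T : Finset ι, v T - ∑ j ∈ T, p j ≤ v S - ∑ j ∈ S, p j

variable {ι : Type*} [DecidableEq ι] {v : Finset ι → ℝ} {p : ι → ℝ} {S T A : Finset ι}

theorem IsDemanded.sub_le_sum_of_disjoint (hS : IsDemanded v p S) (hAS : Disjoint A S) :
    v (A ∪ S) - v S ≤ ∑ j ∈ A, p j := by
  have := hS (A ∪ S)
  rw [sum_union hAS] at this
  linarith

theorem IsDemanded.sum_sdiff_le_sub (hS : IsDemanded v p S) (hTS : T ⊆ S) :
    ∑ j ∈ S \ T, p j ≤ v S - v T := by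
  linarith [hS T, sum_sdiff (f := p) hTS]

end Demand

section UnitDemand

variable {ι : Type*} [DecidableEq ι] {b c : ℝ} {p : ι → ℝ} {S : Finset ι} {j : ι}

/-- The unit-demand valuation to which every item, and hence every nonempty bundle, is worth `c`. -/
def unitDemandVal (c : ℝ) (S : Finset ι) : ℝ :=
  if S = ∅ then 0 else c

@[simp]
theorem unitDemandVal_empty : unitDemandVal c (∅ : Finset ι) = 0 :=
  if_pos rfl

theorem unitDemandVal_of_nonempty (hS : S.Nonempty) : unitDemandVal c S = c :=
  if_neg hS.ne_empty

theorem unitDemandVal_le (hcb : c ≤ b) (hb : 0 ≤ b) : unitDemandVal c S ≤ b := by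
  unfold unitDemandVal
  split_ifs <;> assumption

theorem unitDemandVal_le_half_card (hc : c ≤ 1 / 2) : unitDemandVal c S ≤ (#S : ℝ) / 2 := by
  rcases S.eq_empty_or_nonempty with rfl | hS
  · simp
  · have : (1 : ℝ) ≤ #S := mod_cast hS.card_pos
    rw [unitDemandVal_of_nonempty hS]
    linarith

theorem IsDemanded.le_price_of_unitDemandVal_empty (h : IsDemanded (unitDemandVal c) p ∅) (j : ι) :
    c ≤ p j := by
  simpa [unitDemandVal_of_nonempty] using h.sub_le_sum_of_disjoint (disjoint_empty_right {j})

theorem IsDemanded.price_le_of_unitDemandVal (hS : IsDemanded (unitDemandVal c) p S)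
    (hp : ∀ i, 0 ≤ p i) (hj : j ∈ S) : p j ≤ c :=
  calc
    p j ≤ ∑ i ∈ S, p i := single_le_sum (fun i _ ↦ hp i) hj
    _ ≤ c := by
      simpa [unitDemandVal_of_nonempty ⟨j, hj⟩] using hS.sum_sdiff_le_sub S.empty_subset

theorem IsDemanded.price_nonpos_of_unitDemandVal (hS : IsDemanded (unitDemandVal c) p S)
    (hS_two : 2 ≤ #S) (hj : j ∈ S) : p j ≤ 0 := by
  have h_erase : (S.erase j).Nonempty :=
    (one_lt_card_iff_nontrivial.mp hS_two).erase_nonempty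
  simpa [unitDemandVal_of_nonempty h_erase, unitDemandVal_of_nonempty ⟨j, hj⟩,
    sdiff_erase_self hj] using hS.sum_sdiff_le_sub (S.erase_subset j)

end UnitDemand

section HalfCard

variable {ι : Type*} [DecidableEq ι] {c δ : ℝ} {p : ι → ℝ} {A B S : Finset ι} {a : ι}

/-- The fractionally subadditive valuation `max(1, |S|/2)` on nonempty bundles: the maximum of the
additive valuations that give weight `1` to a single item or weight `1/2` to every item. -/
noncomputable def halfCardVal (S : Finset ι) : ℝ :=
  if S = ∅ then 0 else max 1 ((#S : ℝ) / 2)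

@[simp]
theorem halfCardVal_empty : halfCardVal (∅ : Finset ι) = 0 :=
  if_pos rfl

theorem halfCardVal_of_nonempty (hS : S.Nonempty) : halfCardVal S = max 1 ((#S : ℝ) / 2) :=
  if_neg hS.ne_empty

theorem one_le_halfCardVal (hS : S.Nonempty) : 1 ≤ halfCardVal S :=
  (le_max_left _ _).trans_eq (halfCardVal_of_nonempty hS).symm

theorem halfCardVal_of_two_le_card (hS : 2 ≤ #S) : halfCardVal S = (#S : ℝ) / 2 := by
  have : (2 : ℝ) ≤ #S := mod_cast hS
  rw [halfCardVal_of_nonempty (card_pos.mp (by omega)), max_eq_right (by linarith)]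

theorem halfCardVal_le_one_of_card_le_two (hS : #S ≤ 2) : halfCardVal S ≤ 1 := by
  have : (#S : ℝ) ≤ 2 := mod_cast hS
  unfold halfCardVal
  split_ifs
  · exact zero_le_one
  · exact max_le le_rfl (by linarith)

theorem halfCardVal_lt_halfCardVal_union (hAS : Disjoint A S) (hA : 2 ≤ #A) :
    halfCardVal S < halfCardVal (A ∪ S) := by
  have h_card : #(A ∪ S) = #A + #S := card_union_of_disjoint hAS
  have hA' : (2 : ℝ) ≤ #A := mod_cast hA
  rw [halfCardVal_of_two_le_card (by omega : 2 ≤ #(A ∪ S)), h_card, Nat.cast_add]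
  rcases S.eq_empty_or_nonempty with rfl | hS
  · rw [halfCardVal_empty]
    positivity
  · have : (1 : ℝ) ≤ #S := mod_cast hS.card_pos
    rw [halfCardVal_of_nonempty hS]
    exact max_lt (by linarith) (by linarith)

theorem IsDemanded.card_le_one_of_price_lt_half (hB : IsDemanded halfCardVal p B) (ha : a ∉ B)
    (hpa : p a < 1 / 2) : #B ≤ 1 := by
  by_contra! hB_two
  have h_marginal := hB.sub_le_sum_of_disjoint (disjoint_singleton_left.mpr ha)
  have h_card : #({a} ∪ B) = #B + 1 := card_insert_of_notMem ha
  rw [halfCardVal_of_two_le_card (by omega : 2 ≤ #({a} ∪ B)), halfCardVal_of_two_le_card hB_two,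
    h_card, Nat.cast_add_one, sum_singleton] at h_marginal
  linarith

theorem IsDemanded.card_le_two_of_half_sub_le_price (hB : IsDemanded halfCardVal p B)
    (hp : ∀ j ∈ B, 1 / 2 - δ ≤ p j) (hδ : ((#B : ℝ) - 1) * δ < 1 / 2) : #B ≤ 2 := by
  by_contra! hB_three
  obtain ⟨b, hb⟩ : B.Nonempty := card_pos.mp (by omega)
  have h_cost : ((#B : ℝ) - 1) * (1 / 2 - δ) ≤ ∑ j ∈ B \ {b}, p j := by
    have := card_nsmul_le_sum (B \ {b}) p _ fun j hj ↦ hp j (mem_sdiff.mp hj).1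
    rwa [nsmul_eq_mul, sdiff_singleton_eq_erase, cast_card_erase_of_mem hb,
      ← sdiff_singleton_eq_erase] at this
  have h_gain : ∑ j ∈ B \ {b}, p j ≤ (#B : ℝ) / 2 - 1 :=
    calc
      ∑ j ∈ B \ {b}, p j ≤ halfCardVal B - halfCardVal {b} :=
        hB.sum_sdiff_le_sub (singleton_subset_iff.mpr hb)
      _ ≤ (#B : ℝ) / 2 - 1 := by
        rw [halfCardVal_of_two_le_card hB_three.le]
        linarith [one_le_halfCardVal (singleton_nonempty b)]
  linarith

theorem IsDemanded.card_unitDemand_le_one (hA : IsDemanded (unitDemandVal c) p A)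
    (hB : IsDemanded halfCardVal p B) (hAB : Disjoint A B) : #A ≤ 1 := by
  by_contra! hA_two
  have h_free : ∑ j ∈ A, p j ≤ 0 :=
    sum_nonpos fun _ hj ↦ hA.price_nonpos_of_unitDemandVal hA_two hj
  linarith [hB.sub_le_sum_of_disjoint hAB, halfCardVal_lt_halfCardVal_union hAB hA_two]

end HalfCard

section Auction

variable {ι : Type} [Fintype ι] [DecidableEq ι] {v : Fin 2 → Finset ι → ℝ}
  {X : Fin 2 → Finset ι} {p : ι → ℝ} {c δ : ℝ}

theorem IsStableItemPricing.card_add_card_le_two (h : IsStableItemPricing v X p)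
    (hv1 : v 0 = unitDemandVal (1 / 2 - δ)) (hv2 : v 1 = halfCardVal) (hδ : 0 < δ)
    (hδ' : ((Fintype.card ι : ℝ) - 1) * δ < 1 / 2) : #(X 0) + #(X 1) ≤ 2 := by
  obtain ⟨h_alloc, hp, h_demand⟩ := h
  have hA : IsDemanded (unitDemandVal (1 / 2 - δ)) p (X 0) := hv1 ▸ h_demand 0
  have hB : IsDemanded halfCardVal p (X 1) := hv2 ▸ h_demand 1
  have h_disj : Disjoint (X 0) (X 1) := h_alloc 0 1 zero_ne_one
  rcases (X 0).eq_empty_or_nonempty with hA_empty | ⟨a, ha⟩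
  · rw [hA_empty] at hA
    have hB_card : (#(X 1) : ℝ) ≤ Fintype.card ι := mod_cast card_le_univ (X 1)
    have hB_two : #(X 1) ≤ 2 :=
      hB.card_le_two_of_half_sub_le_price (fun j _ ↦ hA.le_price_of_unitDemandVal_empty j)
        (lt_of_le_of_lt (by gcongr) hδ')
    simpa only [hA_empty, card_empty, zero_add] using hB_two
  · have hpa : p a < 1 / 2 := by linarith [hA.price_le_of_unitDemandVal hp ha]
    exact add_le_add (hA.card_unitDemand_le_one hB h_disj)
      (hB.card_le_one_of_price_lt_half (disjoint_left.mp h_disj ha) hpa)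

theorem SW_le_one_add (hv1 : v 0 = unitDemandVal c) (hv2 : v 1 = halfCardVal) (hc : 0 ≤ c)
    (hX : #(X 1) ≤ 2) : SW v X ≤ 1 + c := by
  rw [SW, Fin.sum_univ_two, hv1, hv2, add_comm]
  exact add_le_add (halfCardVal_le_one_of_card_le_two hX) (unitDemandVal_le le_rfl hc)

theorem SW_le_half_card (hv1 : v 0 = unitDemandVal c) (hv2 : v 1 = halfCardVal) (hc : c ≤ 1 / 2)
    (hm : 3 ≤ Fintype.card ι) (hX : IsAlloc X) : SW v X ≤ (Fintype.card ι : ℝ) / 2 := by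
  rw [SW, Fin.sum_univ_two, hv1, hv2]
  rcases le_total #(X 1) 2 with hB | hB
  · have hm' : (3 : ℝ) ≤ Fintype.card ι := mod_cast hm
    have hA_val : unitDemandVal c (X 0) ≤ 1 / 2 := unitDemandVal_le hc (by norm_num)
    linarith [halfCardVal_le_one_of_card_le_two hB]
  · have h_card : (#(X 0) : ℝ) + #(X 1) ≤ Fintype.card ι := by
      rw [← Nat.cast_add, ← card_union_of_disjoint (hX 0 1 zero_ne_one)]
      exact mod_cast card_le_univ _
    rw [halfCardVal_of_two_le_card hB]
    linarith [unitDemandVal_le_half_card (S := X 0) hc]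

theorem isGreatest_SW (hv1 : v 0 = unitDemandVal c) (hv2 : v 1 = halfCardVal) (hc : c ≤ 1 / 2)
    (hm : 3 ≤ Fintype.card ι) :
    IsGreatest {w : ℝ | ∃ Z : Fin 2 → Finset ι, IsAlloc Z ∧ SW v Z = w}
      ((Fintype.card ι : ℝ) / 2) := by
  refine ⟨⟨![∅, univ], ?_, ?_⟩, ?_⟩
  · simp [IsAlloc, Fin.forall_fin_two]
  · have h_univ : 2 ≤ #(univ : Finset ι) := by rw [card_univ]; omega
    simp [SW, hv1, hv2, halfCardVal_of_two_le_card h_univ]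
  · rintro _ ⟨Z, hZ, rfl⟩
    exact SW_le_half_card hv1 hv2 hc hm hZ

theorem item_pricing_gap_xos_general (hm : 3 ≤ Fintype.card ι) (hδ : 0 < δ)
    (hδ' : δ < 1 / (2 * ((Fintype.card ι : ℝ) - 1)))
    (hv1 : v 0 = unitDemandVal (1 / 2 - δ)) (hv2 : v 1 = halfCardVal) :
    (∀ (X : Fin 2 → Finset ι) (p : ι → ℝ), IsStableItemPricing v X p →
        #(X 0) + #(X 1) ≤ 2 ∧ SW v X ≤ 3 / 2 - δ) ∧
      IsGreatest {w : ℝ | ∃ Z : Fin 2 → Finset ι, IsAlloc Z ∧ SW v Z = w}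
        ((Fintype.card ι : ℝ) / 2) := by
  have hm' : (3 : ℝ) ≤ Fintype.card ι := mod_cast hm
  have hδ_card : ((Fintype.card ι : ℝ) - 1) * δ < 1 / 2 := by
    rw [lt_div_iff₀ (by linarith)] at hδ'
    linarith
  have hδ_half : 0 ≤ 1 / 2 - δ := by nlinarith
  refine ⟨fun X p h ↦ ?_, isGreatest_SW hv1 hv2 (by linarith) hm⟩
  have h_card := h.card_add_card_le_two hv1 hv2 hδ hδ_card
  have h_welfare := SW_le_one_add hv1 hv2 hδ_half (by omega : #(X 1) ≤ 2)
  exact ⟨h_card, by linarith⟩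

end Auction

/-- With a unit-demand agent valuing any nonempty set at `1/2 − δ` and an XOS
agent with `v₂(S) = max(1, |S|/2)`, every stable item-priced outcome allocates at most two
items in total and has welfare at most `3/2 − δ`, while the optimal welfare equals `m/2`. -/
theorem item_pricing_gap_xos (m : ℕ) (hm : 4 ≤ m) (δ : ℝ) (hδ : 0 < δ)
    (hδ' : δ < 1 / (2 * ((m : ℝ) - 1)))
    (v : Fin 2 → Finset (Fin m) → ℝ)
    (hv1 : ∀ S : Finset (Fin m), v 0 S = if S = ∅ then 0 else 1 / 2 - δ)
    (hv2 : ∀ S : Finset (Fin m), v 1 S = if S = ∅ then 0 else max 1 ((S.card : ℝ) / 2)) :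
    (∀ (X : Fin 2 → Finset (Fin m)) (p : Fin m → ℝ),
        IsStableItemPricing v X p →
          (X 0).card + (X 1).card ≤ 2 ∧ SW v X ≤ 3 / 2 - δ) ∧
      IsGreatest {w : ℝ | ∃ Z : Fin 2 → Finset (Fin m), IsAlloc Z ∧ SW v Z = w}
        ((m : ℝ) / 2) := by
  simpa only [Fintype.card_fin] using
    item_pricing_gap_xos_general (by rw [Fintype.card_fin]; omega) hδ
      (by rwa [Fintype.card_fin]) (funext hv1) (funext hv2)
end

section
/- Let Γ be a partition of the item set M into nonempty bundles with nonnegative bundle prices p, and let X = (X_0, X_1, …, X_n) be an allocation whose nonempty bundles all belong to Γ, such that the assignment giving each agent i the set {X_i} (or ∅ if X_i = ∅) is stable under p. For any constant σ > 0, let p^σ be the prices obtained by adding σ to the price of every bundle of Γ, and define X^σ_i = X_i if v_i(X_i) ≥ p(X_i) + σ and X^σ_i = ∅ otherwise. Then the assignment giving each agent i the set {X^σ_i} (or ∅ if X^σ_i = ∅) is stable under the prices p^σ. -/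
open Finset

/-- A partition of the item set into nonempty, pairwise disjoint bundles covering all items. -/
def IsPartition {ι : Type} [Fintype ι] [DecidableEq ι] (Γ : Finset (Finset ι)) : Prop :=
  (∀ B ∈ Γ, B ≠ ∅) ∧ (∀ B ∈ Γ, ∀ C ∈ Γ, B ≠ C → Disjoint B C) ∧ Γ.sup id = Finset.univ

/-!
Raising every price by `σ` lowers the utility of a set `S` of bundles by `#S * σ`: by at least `σ`
if `S` is nonempty, and by at most `σ` if `S` is an agent's own assignment. The own assignment
therefore still beats every nonempty set, so only `∅`, with utility `0`, can overtake it, and `Xσ`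
gives the agent the better of these two.
-/

section

variable {ι : Type} [Fintype ι] [DecidableEq ι] {n : ℕ} {σ : ℝ}

lemma util_empty (v p : Finset ι → ℝ) : util v p ∅ = v ∅ := by
  simp [util]

lemma util_singleton (v p : Finset ι → ℝ) (B : Finset ι) : util v p {B} = v B - p B := by
  simp [util]

lemma util_add_const (v p : Finset ι → ℝ) (σ : ℝ) (S : Finset (Finset ι)) :
    util v (fun B => p B + σ) S = util v p S - #S * σ := by
  simp only [util, sum_add_distrib, sum_const, nsmul_eq_mul]
  ring

lemma own_of_eq_empty {X : Fin n → Finset ι} {i : Fin n} (h : X i = ∅) : own X i = ∅ :=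
  if_pos h

lemma own_of_ne_empty {X : Fin n → Finset ι} {i : Fin n} (h : X i ≠ ∅) : own X i = {X i} :=
  if_neg h

lemma card_own_le_one (X : Fin n → Finset ι) (i : Fin n) : #(own X i) ≤ 1 := by
  unfold own
  split_ifs <;> simp

lemma util_add_const_le_max {v p : Finset ι → ℝ} {S T : Finset (Finset ι)} (hσ : 0 ≤ σ)
    (hT : #T ≤ 1) (hST : util v p S ≤ util v p T) :
    util v (fun B => p B + σ) S ≤ max (v ∅) (util v (fun B => p B + σ) T) := by
  rcases S.eq_empty_or_nonempty with rfl | hS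
  · exact (util_empty v _).trans_le (le_max_left _ _)
  · refine le_max_of_le_right ?_
    have hcard : #T ≤ #S := hT.trans hS.card_pos
    rw [util_add_const, util_add_const]
    gcongr

lemma util_own_eq_max_zero {v q : Finset ι → ℝ} (hv : v ∅ = 0) {X Y : Fin n → Finset ι} {i : Fin n}
    (hY : Y i = if X i ≠ ∅ ∧ q (X i) ≤ v (X i) then X i else ∅) :
    util v q (own Y i) = max 0 (util v q (own X i)) := by
  have util_of_dropped (h : Y i = ∅) : util v q (own Y i) = 0 := by
    rw [own_of_eq_empty h, util_empty, hv]
  by_cases hX : X i = ∅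
  · rw [util_of_dropped (by simp [hY, hX]), own_of_eq_empty hX, util_empty, hv, max_self]
  rw [own_of_ne_empty hX, util_singleton]
  by_cases hq : q (X i) ≤ v (X i)
  · have hYX : Y i = X i := by rw [hY, if_pos ⟨hX, hq⟩]
    rw [own_of_ne_empty (hYX ▸ hX), util_singleton, hYX, max_eq_right (sub_nonneg.2 hq)]
  · rw [util_of_dropped (by simp [hY, hq]), max_eq_left (sub_nonpos.2 (not_le.1 hq).le)]

theorem stable_after_uniform_price_increase_general {v : Fin n → Finset ι → ℝ}
    (hv : ∀ i, v i ∅ = 0) {Γ : Finset (Finset ι)} {p : Finset ι → ℝ} {X : Fin n → Finset ι}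
    (hstable : ∀ i, ∀ S ⊆ Γ, util (v i) p S ≤ util (v i) p (own X i)) (hσ : 0 ≤ σ)
    {Xσ : Fin n → Finset ι}
    (hXσ : ∀ i, Xσ i = if X i ≠ ∅ ∧ p (X i) + σ ≤ v i (X i) then X i else ∅) :
    ∀ i, ∀ S ⊆ Γ,
      util (v i) (fun B => p B + σ) S ≤ util (v i) (fun B => p B + σ) (own Xσ i) := by
  intro i S hS
  calc util (v i) (fun B => p B + σ) S
      ≤ max (v i ∅) (util (v i) (fun B => p B + σ) (own X i)) :=
        util_add_const_le_max hσ (card_own_le_one X i) (hstable i S hS)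
    _ = max 0 (util (v i) (fun B => p B + σ) (own X i)) := by rw [hv i]
    _ = util (v i) (fun B => p B + σ) (own Xσ i) := (util_own_eq_max_zero (hv i) (hXσ i)).symm

end

/-- Claim on uniform price increases: if the assignment giving each agent `i`
the set `{Xᵢ}` (or `∅`) is stable under prices `p`, then after adding `σ > 0` to every bundle
price and discarding the agents whose value drops below the new price, the resulting
assignment is stable under the shifted prices. -/
theorem stable_after_uniform_price_increase {ι : Type} [Fintype ι] [DecidableEq ι] (n : ℕ)
    (v : Fin n → Finset ι → ℝ) (hv : ∀ i, ValidVal (v i))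
    (Γ : Finset (Finset ι)) (hΓ : IsPartition Γ)
    (p : Finset ι → ℝ) (hp : ∀ B ∈ Γ, 0 ≤ p B)
    (X : Fin n → Finset ι) (hXΓ : ∀ i, X i ≠ ∅ → X i ∈ Γ) (hX : IsAlloc X)
    (hstable : ∀ i : Fin n, ∀ S ⊆ Γ, util (v i) p S ≤ util (v i) p (own X i))
    (σ : ℝ) (hσ : 0 < σ)
    (Xσ : Fin n → Finset ι)
    (hXσ : ∀ i, Xσ i = if X i ≠ ∅ ∧ p (X i) + σ ≤ v i (X i) then X i else ∅) :
    ∀ i : Fin n, ∀ S ⊆ Γ,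
      util (v i) (fun B => p B + σ) S ≤ util (v i) (fun B => p B + σ) (own Xσ i) :=
  stable_after_uniform_price_increase_general (fun i => (hv i).2.2) hstable hσ.le hXσ
end

section
/- Let (X, p) be a Combinatorial Walrasian Equilibrium with k ≥ 1 allocated agents (k = |{i ≥ 1 : X_i ≠ ∅}|) and social welfare SW_0 = Σ_{i=1}^n v_i(X_i) > 0. Let ℓ = ⌈log₂(2k)⌉ and, for t ∈ {1, …, ℓ+1}, set σ_t = 2^{t−1}·SW_0/(2k), W_t = {i : X_i ≠ ∅ and v_i(X_i) ≥ p(X_i) + σ_t}, SW_t = Σ_{i∈W_t} v_i(X_i), and REV_t = Σ_{i∈W_t} (p(X_i) + σ_t); also let REV_0 = Σ_{i : X_i ≠ ∅} p(X_i). Then there exists t ∈ {0, 1, …, ℓ+1} such that REV_t ≥ SW_0/(8ℓ). -/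
open Finset

/-!
Each agent's surplus `u = value - price` is cut into doubling layers: as the largest shift `2^ℓ σ₁`
reaches the whole welfare, hence `u`, the surplus is at most `σ₁` plus the sum of those shifts
`σ₁, 2σ₁, …, 2^(ℓ-1) σ₁` that do not exceed it. Every shift that an agent's surplus covers is
collected from him in the corresponding `REV_t`, so summing over the `k` agents bounds the welfare
by `REV_0 + kσ₁ + REV_1 + ⋯ + REV_ℓ`. Since `kσ₁` is half the welfare, the `ℓ + 1` revenues add up
to at least the other half, and one of them is at least their average.
-/

theorem min_le_add_sum_filter_of_le_add_self {M : Type*} [AddCommMonoid M] [LinearOrder M]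
    [IsOrderedAddMonoid M] {f : ℕ → M} (hf : ∀ t, f (t + 1) ≤ f t + f t) (u : M) (m : ℕ) :
    min u (f m) ≤ f 0 + ∑ t ∈ range m with f t ≤ u, f t := by
  simp only [sum_filter]
  induction m with
  | zero => simp
  | succ m ih =>
    rw [sum_range_succ, ← add_assoc]
    split_ifs with hfu
    · rw [min_eq_right hfu] at ih
      calc min u (f (m + 1)) ≤ f m + f m := (min_le_right _ _).trans (hf m)
        _ ≤ _ := by gcongr
    · rw [min_eq_left (not_le.mp hfu).le] at ih
      simpa using (min_le_left _ _).trans ih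

section Revenue

variable {α : Type*} {A : Finset α} {value price : α → ℝ}

/-- The revenue `REV_t` as a function of the shift `s = σ_t`: every price is raised by `s`, and only
the agents of `A` whose value covers the raised price keep buying. -/
noncomputable def shiftedRevenue (A : Finset α) (value price : α → ℝ) (s : ℝ) : ℝ :=
  ∑ i ∈ A with price i + s ≤ value i, (price i + s)

/-- The sequence `REV_0, REV_1, …` for the allocated agents `A`, each reduced to the value and the
price of the bundle he receives. In `REV_0` all agents of `A` pay, whether or not their value covers
the price. -/
noncomputable def doublingRevenue (A : Finset α) (value price : α → ℝ) : ℕ → ℝ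
  | 0 => ∑ i ∈ A, price i
  | t + 1 => shiftedRevenue A value price (2 ^ t * (∑ i ∈ A, value i) / (2 * #A))

theorem sum_shift_le_shiftedRevenue (hprice : ∀ i ∈ A, 0 ≤ price i) (s : ℝ) :
    ∑ i ∈ A with s ≤ value i - price i, s ≤ shiftedRevenue A value price s := by
  simp only [shiftedRevenue, le_sub_iff_add_le']
  exact sum_le_sum fun i hi ↦ le_add_of_nonneg_left (hprice i (mem_filter.mp hi).1)

theorem sum_value_le_sum_price_add_sum_shiftedRevenue (hprice : ∀ i ∈ A, 0 ≤ price i)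
    {f : ℕ → ℝ} (hf : ∀ t, f (t + 1) ≤ f t + f t) {m : ℕ} (hm : ∀ i ∈ A, value i ≤ f m) :
    ∑ i ∈ A, value i ≤
      ∑ i ∈ A, price i + #A * f 0 + ∑ t ∈ range m, shiftedRevenue A value price (f t) := by
  have surplus_le : ∀ i ∈ A,
      value i - price i ≤ f 0 + ∑ t ∈ range m with f t ≤ value i - price i, f t := by
    intro i hi
    have hsurplus : value i - price i ≤ f m :=
      (sub_le_self _ (hprice i hi)).trans (hm i hi)
    simpa only [min_eq_left hsurplus] using
      min_le_add_sum_filter_of_le_add_self hf (value i - price i) m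
  have sum_surplus_le : ∑ i ∈ A, value i - ∑ i ∈ A, price i ≤
      #A * f 0 + ∑ t ∈ range m, shiftedRevenue A value price (f t) :=
    calc ∑ i ∈ A, value i - ∑ i ∈ A, price i
      _ = ∑ i ∈ A, (value i - price i) := (sum_sub_distrib _ _).symm
      _ ≤ ∑ i ∈ A, (f 0 + ∑ t ∈ range m with f t ≤ value i - price i, f t) :=
        sum_le_sum surplus_le
      _ = #A * f 0 + ∑ t ∈ range m, ∑ i ∈ A with f t ≤ value i - price i, f t := by
        rw [sum_add_distrib, sum_const, nsmul_eq_mul]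
        simp only [sum_filter]
        rw [sum_comm]
      _ ≤ #A * f 0 + ∑ t ∈ range m, shiftedRevenue A value price (f t) := by
        gcongr
        exact sum_shift_le_shiftedRevenue hprice _
  linarith

theorem half_sum_value_le_sum_doublingRevenue (hA : A.Nonempty) (hvalue : ∀ i ∈ A, 0 ≤ value i)
    (hprice : ∀ i ∈ A, 0 ≤ price i) {m : ℕ} (hm : 2 * #A ≤ 2 ^ m) :
    (∑ i ∈ A, value i) / 2 ≤ ∑ t ∈ range (m + 1), doublingRevenue A value price t := by
  set welfare := ∑ i ∈ A, value i with hwelfare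
  have hcard : (0 : ℝ) < #A := by exact_mod_cast hA.card_pos
  have welfare_le_last_shift : welfare ≤ 2 ^ m * welfare / (2 * #A) := by
    have hm' : (2 * #A : ℝ) ≤ 2 ^ m := by exact_mod_cast hm
    rw [le_div_iff₀ (mul_pos two_pos hcard), mul_comm]
    exact mul_le_mul_of_nonneg_right hm' (sum_nonneg hvalue)
  have welfare_le := sum_value_le_sum_price_add_sum_shiftedRevenue hprice
    (f := fun t ↦ 2 ^ t * welfare / (2 * #A)) (fun t ↦ le_of_eq (by ring))
    fun i hi ↦ (single_le_sum hvalue hi).trans welfare_le_last_shift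
  have first_shift : #A * (2 ^ 0 * welfare / (2 * #A)) = welfare / 2 := by
    field_simp [hcard.ne']
  rw [sum_range_succ']
  simp only [doublingRevenue, ← hwelfare]
  linarith

theorem exists_price_shift_with_high_revenue_general (hA : A.Nonempty)
    (hvalue : ∀ i ∈ A, 0 ≤ value i) (hprice : ∀ i ∈ A, 0 ≤ price i) :
    ∃ t ≤ Nat.clog 2 (2 * #A),
      (∑ i ∈ A, value i) / (2 * (Nat.clog 2 (2 * #A) + 1)) ≤ doublingRevenue A value price t := by
  set ℓ := Nat.clog 2 (2 * #A)
  have average_le : ∑ _t ∈ range (ℓ + 1), (∑ i ∈ A, value i) / (2 * (ℓ + 1)) ≤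
      ∑ t ∈ range (ℓ + 1), doublingRevenue A value price t :=
    calc ∑ _t ∈ range (ℓ + 1), (∑ i ∈ A, value i) / (2 * (ℓ + 1))
      _ = (∑ i ∈ A, value i) / 2 := by
        rw [sum_const, card_range, nsmul_eq_mul]
        push_cast
        field_simp
      _ ≤ ∑ t ∈ range (ℓ + 1), doublingRevenue A value price t :=
        half_sum_value_le_sum_doublingRevenue hA hvalue hprice
          (Nat.le_pow_clog one_lt_two _)
  obtain ⟨t, ht, hle⟩ := exists_le_of_sum_le nonempty_range_add_one average_le
  exact ⟨t, mem_range_succ_iff.mp ht, hle⟩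

end Revenue

section Allocation

variable {ι : Type} [Fintype ι] [DecidableEq ι] {n : ℕ} {v : Fin n → Finset ι → ℝ}
  {X : Fin n → Finset ι} {p : Finset ι → ℝ}

theorem IsCWE.price_nonneg (hcwe : IsCWE v X p) {i : Fin n} (hi : X i ≠ ∅) : 0 ≤ p (X i) :=
  hcwe.2.1 _ (by simp [Bundles, hi])

theorem sum_allocated_eq_SW (hv : ∀ i, v i ∅ = 0) : ∑ i with X i ≠ ∅, v i (X i) = SW v X :=
  sum_filter_of_ne fun i _ hne hempty ↦ hne (by rw [hempty, hv])

end Allocation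

/-- key revenue lemma: for a CWE `(X, p)` with `k ≥ 1` allocated agents and
positive social welfare `SW₀`, with `ℓ = ⌈log₂(2k)⌉`, `σ_t = 2^(t−1)·SW₀/(2k)`,
`W_t = {i : Xᵢ ≠ ∅ and vᵢ(Xᵢ) ≥ p(Xᵢ) + σ_t}` and the corresponding revenues `REV_t`,
there is some `t ∈ {0, 1, …, ℓ+1}` with `REV_t ≥ SW₀/(8ℓ)`. -/
theorem exists_price_shift_with_high_revenue {ι : Type} [Fintype ι] [DecidableEq ι] (n : ℕ)
    (v : Fin n → Finset ι → ℝ) (hv : ∀ i, ValidVal (v i))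
    (X : Fin n → Finset ι) (p : Finset ι → ℝ) (hcwe : IsCWE v X p)
    (k : ℕ) (hk : k = (Finset.univ.filter (fun i : Fin n => X i ≠ ∅)).card) (hk1 : 1 ≤ k)
    (hSW : 0 < SW v X)
    (ℓ : ℕ) (hℓ : ℓ = Nat.clog 2 (2 * k))
    (σ : ℕ → ℝ) (hσ : ∀ t : ℕ, σ t = 2 ^ (t - 1) * SW v X / (2 * k))
    (W : ℕ → Finset (Fin n))
    (hW : ∀ t : ℕ, W t =
      Finset.univ.filter (fun i : Fin n => X i ≠ ∅ ∧ p (X i) + σ t ≤ v i (X i)))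
    (REV : ℕ → ℝ)
    (hREV0 : REV 0 = ∑ i ∈ Finset.univ.filter (fun i : Fin n => X i ≠ ∅), p (X i))
    (hREV : ∀ t : ℕ, 1 ≤ t → REV t = ∑ i ∈ W t, (p (X i) + σ t)) :
    ∃ t ≤ ℓ + 1, REV t ≥ SW v X / (8 * (ℓ : ℝ)) := by
  subst hk hℓ
  obtain ⟨t, ht, hle⟩ := exists_price_shift_with_high_revenue_general
    (value := fun i ↦ v i (X i)) (card_pos.mp hk1) (fun i _ ↦ (hv i).1 _)
    (fun i hi ↦ hcwe.price_nonneg (mem_filter.mp hi).2)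
  have welfare_eq := sum_allocated_eq_SW (X := X) fun i ↦ (hv i).2.2
  have REV_eq : REV t = doublingRevenue {i | X i ≠ ∅} (fun i ↦ v i (X i)) (fun i ↦ p (X i)) t := by
    cases t with
    | zero => exact hREV0
    | succ t => rw [hREV _ t.succ_pos, hW, hσ, doublingRevenue, shiftedRevenue, welfare_eq,
        filter_filter, Nat.succ_sub_one]
  set ℓ := Nat.clog 2 (2 * #{i | X i ≠ ∅})
  have one_le_ℓ : (1 : ℝ) ≤ ℓ := by exact_mod_cast Nat.clog_pos one_lt_two (by lia)
  refine ⟨t, Nat.le_succ_of_le ht, ?_⟩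
  calc SW v X / (8 * ℓ) ≤ SW v X / (2 * (ℓ + 1)) :=
        div_le_div_of_nonneg_left hSW.le (by positivity) (by linarith)
    _ ≤ REV t := by rwa [REV_eq, ← welfare_eq]
end

section
/- For every auction with n ≥ 1 agents having nonnegative, monotone, normalized valuations, and every allocation Y = (Y_0, Y_1, …, Y_n), there exists a Combinatorial Walrasian Equilibrium (X, p) whose revenue is at least SW(Y)/(16·⌈log₂(2n)⌉); i.e., one can find a CWE extracting revenue within an O(log n) factor of the social welfare of Y. -/
open Finset

/-!
Fix a threshold `t` and let a seller offer, at reserve price `t / 2`, each bundle `Y i` with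
`t ≤ v i (Y i)`. Run an ascending auction: an unsatisfied buyer takes over his favourite union of
current bundles and pays their total price plus `ε`. Buyers holding a bundle stay `ε`-satisfied
because bundles only merge and prices only rise, and the total price grows by `ε` at each
step, so the process stops; compactness of the price space removes the `ε`.

At the resulting equilibrium the total price is at least `t / 2` times the number of lots. If the
lot `Y i` is unsold, buyer `i` could have it with surplus `t / 2`, so he holds some other bundle,
for which he pays at least `t / 2`. Hence the unsold lots account for at most half of the total
price. Choosing the best `t` loses a further harmonic factor.
-/

open scoped Function

theorem sum_le_harmonic_mul_of_forall_mul_card_le {γ : Type*} (s : Finset γ) {a : γ → ℝ} {M : ℝ}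
    (ha : ∀ i ∈ s, 0 ≤ a i) (hM : ∀ i ∈ s, a i * #{j ∈ s | a i ≤ a j} ≤ M) :
    ∑ i ∈ s, a i ≤ harmonic #s * M := by
  classical
  induction hcard : #s generalizing s with
  | zero => simp [Finset.card_eq_zero.mp hcard]
  | succ k ih =>
    obtain ⟨i, hi, hmin⟩ := s.exists_min_image a (Finset.card_pos.mp (by omega))
    have min_le : a i ≤ (k + 1 : ℝ)⁻¹ * M := by
      have h := hM i hi
      rw [Finset.filter_true_of_mem hmin, hcard] at h
      rw [inv_mul_eq_div, le_div_iff₀ (by positivity)]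
      exact_mod_cast h
    have erase_le : ∑ j ∈ s.erase i, a j ≤ harmonic k * M := by
      refine ih _ (fun j hj => ha j (Finset.mem_of_mem_erase hj)) (fun j hj => ?_)
        (by rw [Finset.card_erase_of_mem hi, hcard, Nat.add_sub_cancel])
      have hjs := Finset.mem_of_mem_erase hj
      refine le_trans ?_ (hM j hjs)
      gcongr
      · exact ha j hjs
      · exact Finset.erase_subset i s
    rw [← Finset.add_sum_erase s a hi, harmonic_succ]
    push_cast
    linarith

theorem exists_threshold_sum_le_harmonic_mul {γ : Type*} (s : Finset γ) {a : γ → ℝ}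
    (ha : ∀ i ∈ s, 0 ≤ a i) :
    ∃ t, 0 ≤ t ∧ ∑ i ∈ s, a i ≤ harmonic #s * (t * #{i ∈ s | t ≤ a i}) := by
  obtain rfl | hs := s.eq_empty_or_nonempty
  · exact ⟨0, le_rfl, by simp⟩
  · obtain ⟨i, hi, hmax⟩ := s.exists_max_image (fun i => a i * #{j ∈ s | a i ≤ a j}) hs
    exact ⟨a i, ha i hi, sum_le_harmonic_mul_of_forall_mul_card_le s ha hmax⟩

theorem harmonic_le_clog_two_mul (n : ℕ) : (harmonic n : ℝ) ≤ Nat.clog 2 (2 * n) := by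
  obtain rfl | hn := Nat.eq_zero_or_pos n
  · simp
  have two_mul_le_pow : (2 * n : ℝ) ≤ 2 ^ Nat.clog 2 (2 * n) := by
    exact_mod_cast Nat.le_pow_clog one_lt_two (2 * n)
  have one_le_clog : (1 : ℝ) ≤ Nat.clog 2 (2 * n) := by
    exact_mod_cast Nat.clog_pos one_lt_two (by omega)
  have log_le : Real.log 2 + Real.log n ≤ Nat.clog 2 (2 * n) * Real.log 2 := by
    rw [← Real.log_mul two_ne_zero (by positivity), ← Real.log_pow]
    exact Real.log_le_log (by positivity) two_mul_le_pow
  have log_two_le : Real.log 2 ≤ 1 := by linarith [Real.log_two_lt_d9]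
  have := harmonic_le_one_add_log n
  nlinarith

section PricedAllocations

variable {β ι : Type*} [DecidableEq ι]

/-- The quasilinear utility of buying all the bundles of the owners in `S`, when owner `o` holds
the bundle `A o` at price `P o`. Indexing prices by owners rather than by bundles keeps track of who
holds what while bundles are merged. -/
def ownerUtil (u : Finset ι → ℝ) (A : β → Finset ι) (P : β → ℝ) (S : Finset β) : ℝ :=
  u (S.biUnion A) - ∑ o ∈ S, P o

/-- Owner `o`, with valuation `u`, cannot gain more than `ε` by exchanging his bundle for the
bundles of any set of owners. -/
def IsSatisfied (ε : ℝ) (u : Finset ι → ℝ) (A : β → Finset ι) (P : β → ℝ) (o : β) : Prop :=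
  ∀ S, ownerUtil u A P S ≤ u (A o) - P o + ε

variable {u : Finset ι → ℝ} {A : β → Finset ι} {P : β → ℝ} {ε : ℝ} {o : β}

namespace IsSatisfied

theorem mono {ε' : ℝ} (h : IsSatisfied ε u A P o) (hε : ε ≤ ε') : IsSatisfied ε' u A P o :=
  fun S => (h S).trans (by gcongr)

theorem price_le (h : IsSatisfied ε u A P o) (hu : u ∅ = 0) : P o ≤ u (A o) + ε := by
  have := h ∅
  simp only [ownerUtil, Finset.biUnion_empty, Finset.sum_empty, hu] at this
  linarith

theorem comp_embedding {γ : Type*} (f : γ ↪ β) {i : γ} (h : IsSatisfied ε u A P (f i)) :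
    IsSatisfied ε u (A ∘ f) (P ∘ f) i := by
  intro S
  have biUnion_map : (S.map f).biUnion A = S.biUnion (A ∘ f) := by
    ext x
    simp
  simpa [ownerUtil, biUnion_map] using h (S.map f)

end IsSatisfied

theorem isClosed_setOf_isSatisfied (ε : ℝ) (u : Finset ι → ℝ) (A : β → Finset ι) (o : β) :
    IsClosed {P : β → ℝ | IsSatisfied ε u A P o} := by
  simp only [IsSatisfied, ownerUtil, Set.ofPred_forall]
  exact isClosed_iInter fun S => isClosed_le (by fun_prop) (by fun_prop)

variable [DecidableEq β] {S : Finset β} {j : β}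

/-- The bundles after owner `j` takes over those of all owners in `S`. -/
def takeoverAlloc (A : β → Finset ι) (S : Finset β) (j : β) : β → Finset ι :=
  Function.update (S.piecewise (fun _ => ∅) A) j (S.biUnion A)

/-- The prices after owner `j` takes over the bundles of all owners in `S` at a mark-up of `ε`. -/
def takeoverPrice (ε : ℝ) (P : β → ℝ) (S : Finset β) (j : β) : β → ℝ :=
  Function.update (S.piecewise (fun _ => 0) P) j (∑ o ∈ S, P o + ε)

theorem takeoverAlloc_self : takeoverAlloc A S j j = S.biUnion A := Function.update_self ..

theorem takeoverPrice_self : takeoverPrice ε P S j j = ∑ o ∈ S, P o + ε := Function.update_self ..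

theorem takeoverAlloc_of_mem (hoj : o ≠ j) (ho : o ∈ S) : takeoverAlloc A S j o = ∅ := by
  simp [takeoverAlloc, hoj, ho]

theorem takeoverPrice_of_mem (hoj : o ≠ j) (ho : o ∈ S) : takeoverPrice ε P S j o = 0 := by
  simp [takeoverPrice, hoj, ho]

theorem takeoverAlloc_of_notMem (hoj : o ≠ j) (ho : o ∉ S) : takeoverAlloc A S j o = A o := by
  simp [takeoverAlloc, hoj, ho]

theorem takeoverPrice_of_notMem (hoj : o ≠ j) (ho : o ∉ S) : takeoverPrice ε P S j o = P o := by
  simp [takeoverPrice, hoj, ho]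

theorem pairwise_disjoint_takeoverAlloc (hA : Pairwise (Disjoint on A)) :
    Pairwise (Disjoint on takeoverAlloc A S j) := by
  have disjoint_self : ∀ o ≠ j, Disjoint (takeoverAlloc A S j j) (takeoverAlloc A S j o) := by
    intro o hoj
    by_cases ho : o ∈ S
    · simp [takeoverAlloc_of_mem hoj ho]
    · rw [takeoverAlloc_self, takeoverAlloc_of_notMem hoj ho, Finset.disjoint_biUnion_left]
      exact fun o' ho' => hA (ne_of_mem_of_not_mem ho' ho)
  intro o o' hoo'
  simp only [Function.onFun]
  obtain rfl | hoj := eq_or_ne o j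
  · exact disjoint_self o' hoo'.symm
  obtain rfl | hoj' := eq_or_ne o' j
  · exact (disjoint_self o hoj).symm
  by_cases ho : o ∈ S
  · simp [takeoverAlloc_of_mem hoj ho]
  by_cases ho' : o' ∈ S
  · simp [takeoverAlloc_of_mem hoj' ho']
  · rw [takeoverAlloc_of_notMem hoj ho, takeoverAlloc_of_notMem hoj' ho']
    exact hA hoo'

theorem biUnion_takeoverAlloc_of_mem {T : Finset β} (hA : A j = ∅) (hj : j ∈ T) :
    T.biUnion (takeoverAlloc A S j) = (T ∪ S).biUnion A := by
  ext x
  simp only [Finset.mem_biUnion, takeoverAlloc, Function.update_apply, Finset.piecewise]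
  grind

theorem biUnion_takeoverAlloc_of_notMem {T : Finset β} (hj : j ∉ T) :
    T.biUnion (takeoverAlloc A S j) = (T \ S).biUnion A := by
  ext x
  simp only [Finset.mem_biUnion, takeoverAlloc, Function.update_apply, Finset.piecewise]
  grind

theorem sum_takeoverPrice_of_mem {T : Finset β} (hP : P j = 0) (hj : j ∈ T) :
    ∑ o ∈ T, takeoverPrice ε P S j o = ∑ o ∈ T ∪ S, P o + ε := by
  have sum_sdiff_singleton : ∑ o ∈ (T \ {j}) \ S, P o = ∑ o ∈ T \ S, P o := by
    refine Finset.sum_subset (by grind) fun o ho ho' => ?_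
    rwa [show o = j by grind]
  rw [takeoverPrice, Finset.sum_update_of_mem hj, Finset.sum_piecewise, Finset.sum_const_zero,
    sum_sdiff_singleton, ← Finset.sdiff_union_self_eq_union,
    Finset.sum_union Finset.sdiff_disjoint]
  ring

theorem sum_takeoverPrice_of_notMem {T : Finset β} (hj : j ∉ T) :
    ∑ o ∈ T, takeoverPrice ε P S j o = ∑ o ∈ T \ S, P o := by
  rw [takeoverPrice, Finset.sum_update_of_notMem hj, Finset.sum_piecewise, Finset.sum_const_zero,
    zero_add]

theorem exists_ownerUtil_takeover_le (hA : A j = ∅) (hP : P j = 0) (hε : 0 ≤ ε) (T : Finset β) :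
    ∃ T', ∀ u,
      ownerUtil u (takeoverAlloc A S j) (takeoverPrice ε P S j) T ≤ ownerUtil u A P T' := by
  by_cases hj : j ∈ T
  · refine ⟨T ∪ S, fun u => ?_⟩
    rw [ownerUtil, ownerUtil, biUnion_takeoverAlloc_of_mem hA hj, sum_takeoverPrice_of_mem hP hj]
    linarith
  · refine ⟨T \ S, fun u => ?_⟩
    rw [ownerUtil, ownerUtil, biUnion_takeoverAlloc_of_notMem hj, sum_takeoverPrice_of_notMem hj]

theorem IsSatisfied.takeover_of_notMem (h : IsSatisfied ε u A P o) (hA : A j = ∅) (hP : P j = 0)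
    (hε : 0 ≤ ε) (hoj : o ≠ j) (ho : o ∉ S) :
    IsSatisfied ε u (takeoverAlloc A S j) (takeoverPrice ε P S j) o := by
  intro T
  obtain ⟨T', hT'⟩ := exists_ownerUtil_takeover_le (S := S) hA hP hε T
  rw [takeoverAlloc_of_notMem hoj ho, takeoverPrice_of_notMem hoj ho]
  exact (hT' u).trans (h T')

theorem isSatisfied_takeover_self (hmax : ∀ T, ownerUtil u A P T ≤ ownerUtil u A P S)
    (hA : A j = ∅) (hP : P j = 0) (hε : 0 ≤ ε) :
    IsSatisfied ε u (takeoverAlloc A S j) (takeoverPrice ε P S j) j := by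
  intro T
  obtain ⟨T', hT'⟩ := exists_ownerUtil_takeover_le (S := S) hA hP hε T
  refine (hT' u).trans ((hmax T').trans_eq ?_)
  rw [takeoverAlloc_self, takeoverPrice_self, ownerUtil]
  ring

end PricedAllocations

theorem exists_forall_pos_of_forall_pos_exists {γ : Type*} [Finite γ] {p : ℝ → γ → Prop}
    (hp : ∀ ⦃ε ε' : ℝ⦄, ε ≤ ε' → ∀ a, p ε a → p ε' a) (h : ∀ ε > 0, ∃ a, p ε a) :
    ∃ a, ∀ ε > 0, p ε a := by
  by_contra! hfail
  choose e he hpe using hfail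
  have : Nonempty γ := ⟨(h 1 one_pos).choose⟩
  obtain ⟨a₀, hmin⟩ := Finite.exists_min e
  obtain ⟨a, ha⟩ := h (e a₀) (he a₀)
  exact hpe a (hp (hmin a) a ha)

section ReserveAuction

variable {α σ ι : Type*} [Fintype α] [Fintype σ]

/-- The states of an auction in which every seller `s : σ` offers the lot `E s` at reserve price
`ρ`: the owners are the buyers `α` and the sellers `σ`, the lots have been merged into the bundles
`A`, and owner `o` holds `A o` at price `P o`. A seller either still offers his lot or holds
nothing. -/
structure IsReserveState (E : σ → Finset ι) (ρ : ℝ) (A : α ⊕ σ → Finset ι) (P : α ⊕ σ → ℝ) :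
    Prop where
  pairwise_disjoint : Pairwise (Disjoint on A)
  price_eq_zero : ∀ o, A o = ∅ → P o = 0
  reserve_le_price : ∀ o, A o ≠ ∅ → ρ ≤ P o
  seller_eq : ∀ s, A (.inr s) ≠ ∅ → A (.inr s) = E s ∧ P (.inr s) = ρ
  card_mul_reserve_le : Fintype.card σ * ρ ≤ ∑ o, P o

variable {E : σ → Finset ι} {ρ ε : ℝ} {A : α ⊕ σ → Finset ι} {P : α ⊕ σ → ℝ}

theorem isReserveState_initial (hE : Pairwise (Disjoint on E)) (hρ : ∀ s, E s = ∅ → ρ = 0) :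
    IsReserveState (α := α) E ρ (Sum.elim (fun _ => ∅) E) (Sum.elim (fun _ => 0) fun _ => ρ) where
  pairwise_disjoint := by
    rintro (i | s) (i' | s') h
    case inr.inr => exact hE fun hs => h (congrArg _ hs)
    all_goals simp [Function.onFun]
  price_eq_zero := by
    rintro (i | s) h
    · rfl
    · exact hρ s h
  reserve_le_price := by
    rintro (i | s) h
    · exact absurd rfl h
    · exact le_rfl
  seller_eq _ _ := ⟨rfl, rfl⟩
  card_mul_reserve_le := by simp

namespace IsReserveState

theorem price_nonneg (h : IsReserveState E ρ A P) (hρ : 0 ≤ ρ) (o : α ⊕ σ) : 0 ≤ P o := by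
  by_cases ho : A o = ∅
  · exact (h.price_eq_zero o ho).ge
  · exact hρ.trans (h.reserve_le_price o ho)

theorem seller_price_le (h : IsReserveState E ρ A P) (hρ : 0 ≤ ρ) (s : σ) : P (.inr s) ≤ ρ := by
  by_cases hs : A (.inr s) = ∅
  · exact (h.price_eq_zero _ hs).trans_le hρ
  · exact (h.seller_eq s hs).2.le

end IsReserveState

theorem isClosed_setOf_isReserveState (E : σ → Finset ι) (ρ : ℝ) (A : α ⊕ σ → Finset ι) :
    IsClosed {P | IsReserveState E ρ A P} := by
  have setOf_eq : {P | IsReserveState E ρ A P} =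
      {P | Pairwise (Disjoint on A) ∧ (∀ o, A o = ∅ → P o = 0) ∧ (∀ o, A o ≠ ∅ → ρ ≤ P o) ∧
        (∀ s, A (.inr s) ≠ ∅ → A (.inr s) = E s ∧ P (.inr s) = ρ) ∧
        Fintype.card σ * ρ ≤ ∑ o, P o} :=
    Set.ext fun P => ⟨fun ⟨h₁, h₂, h₃, h₄, h₅⟩ => ⟨h₁, h₂, h₃, h₄, h₅⟩,
      fun ⟨h₁, h₂, h₃, h₄, h₅⟩ => ⟨h₁, h₂, h₃, h₄, h₅⟩⟩
  rw [setOf_eq]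
  simp only [Set.ofPred_and, Set.ofPred_forall]
  refine isClosed_const.inter (.inter ?_ (.inter ?_ (.inter ?_ ?_)))
  · exact isClosed_iInter fun o => isClosed_iInter fun _ => isClosed_eq (by fun_prop) (by fun_prop)
  · exact isClosed_iInter fun o => isClosed_iInter fun _ => isClosed_le (by fun_prop) (by fun_prop)
  · exact isClosed_iInter fun s => isClosed_iInter fun _ =>
      isClosed_const.inter (isClosed_eq (by fun_prop) (by fun_prop))
  · exact isClosed_le (by fun_prop) (by fun_prop)

variable [DecidableEq ι] {v : α → Finset ι → ℝ}

/-- Every buyer holding a nonempty bundle is satisfied up to `ε`; the invariant of the ascending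
auction. -/
def WinnersSatisfied (ε : ℝ) (v : α → Finset ι → ℝ) (A : α ⊕ σ → Finset ι) (P : α ⊕ σ → ℝ) :
    Prop :=
  ∀ i, A (.inl i) ≠ ∅ → IsSatisfied ε (v i) A P (.inl i)

namespace IsReserveState

theorem takeover [DecidableEq α] [DecidableEq σ] {S : Finset (α ⊕ σ)} {j : α}
    (h : IsReserveState E ρ A P) (hρ : 0 ≤ ρ) (hε : 0 ≤ ε) (hj : A (.inl j) = ∅)
    (hS : S.biUnion A ≠ ∅) :
    IsReserveState E ρ (takeoverAlloc A S (.inl j)) (takeoverPrice ε P S (.inl j)) where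
  pairwise_disjoint := pairwise_disjoint_takeoverAlloc h.pairwise_disjoint
  price_eq_zero o ho := by
    obtain rfl | hoj := eq_or_ne o (.inl j)
    · exact absurd (takeoverAlloc_self.symm.trans ho) hS
    by_cases hoS : o ∈ S
    · exact takeoverPrice_of_mem hoj hoS
    · rw [takeoverAlloc_of_notMem hoj hoS] at ho
      rw [takeoverPrice_of_notMem hoj hoS, h.price_eq_zero o ho]
  reserve_le_price o ho := by
    obtain rfl | hoj := eq_or_ne o (.inl j)
    · obtain ⟨x, hx⟩ := Finset.nonempty_iff_ne_empty.mpr hS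
      obtain ⟨o, hoS, hxo⟩ := Finset.mem_biUnion.mp hx
      calc ρ ≤ P o := h.reserve_le_price o (Finset.ne_empty_of_mem hxo)
        _ ≤ ∑ o ∈ S, P o := Finset.single_le_sum (fun o _ => h.price_nonneg hρ o) hoS
        _ ≤ ∑ o ∈ S, P o + ε := le_add_of_nonneg_right hε
        _ = _ := takeoverPrice_self.symm
    by_cases hoS : o ∈ S
    · exact absurd (takeoverAlloc_of_mem hoj hoS) ho
    · rw [takeoverAlloc_of_notMem hoj hoS] at ho
      rw [takeoverPrice_of_notMem hoj hoS]
      exact h.reserve_le_price o ho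
  seller_eq s hs := by
    by_cases hsS : Sum.inr s ∈ S
    · exact absurd (takeoverAlloc_of_mem Sum.inr_ne_inl hsS) hs
    · rw [takeoverAlloc_of_notMem Sum.inr_ne_inl hsS] at hs ⊢
      rw [takeoverPrice_of_notMem Sum.inr_ne_inl hsS]
      exact h.seller_eq s hs
  card_mul_reserve_le := by
    rw [sum_takeoverPrice_of_mem (h.price_eq_zero _ hj) (Finset.mem_univ _),
      Finset.union_eq_left.mpr (Finset.subset_univ S)]
    exact h.card_mul_reserve_le.trans (le_add_of_nonneg_right hε)

theorem exists_takeover (h : IsReserveState E ρ A P) (hsat : WinnersSatisfied ε v A P)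
    (hv : ∀ i, v i ∅ = 0) (hρ : 0 ≤ ρ) (hε : 0 ≤ ε) {j : α}
    (hj : ¬ IsSatisfied ε (v j) A P (.inl j)) :
    ∃ A' P', IsReserveState E ρ A' P' ∧ WinnersSatisfied ε v A' P' ∧
      ∑ o, P' o = ∑ o, P o + ε := by
  classical
  have hA : A (.inl j) = ∅ := by
    by_contra hne
    exact hj (hsat j hne)
  have hP : P (.inl j) = 0 := h.price_eq_zero _ hA
  obtain ⟨S, hmax⟩ := Finite.exists_max (ownerUtil (v j) A P)
  have lt_util : ε < ownerUtil (v j) A P S := by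
    simp only [IsSatisfied, not_forall, not_le, hA, hv, hP, sub_zero, zero_add] at hj
    obtain ⟨T, hT⟩ := hj
    exact hT.trans_le (hmax T)
  have biUnion_ne_empty : S.biUnion A ≠ ∅ := by
    intro hS
    have sum_nonneg : 0 ≤ ∑ o ∈ S, P o := Finset.sum_nonneg fun o _ => h.price_nonneg hρ o
    rw [ownerUtil, hS, hv] at lt_util
    linarith
  refine ⟨_, _, h.takeover hρ hε hA biUnion_ne_empty, fun i hi => ?_, ?_⟩
  · obtain rfl | hij := eq_or_ne i j
    · exact isSatisfied_takeover_self hmax hA hP hε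
    have hij' : (Sum.inl i : α ⊕ σ) ≠ .inl j := Sum.inl_injective.ne hij
    by_cases hiS : Sum.inl i ∈ S
    · exact absurd (takeoverAlloc_of_mem hij' hiS) hi
    · rw [takeoverAlloc_of_notMem hij' hiS] at hi
      exact (hsat i hi).takeover_of_notMem hA hP hε hij' hiS
  · rw [sum_takeoverPrice_of_mem hP (Finset.mem_univ _),
      Finset.union_eq_left.mpr (Finset.subset_univ S)]

theorem buyer_price_le (h : IsReserveState E ρ A P) (hsat : WinnersSatisfied ε v A P)
    (hv : ∀ i, v i ∅ = 0) (hε : 0 ≤ ε) (i : α) : P (.inl i) ≤ v i (A (.inl i)) + ε := by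
  by_cases hi : A (.inl i) = ∅
  · rw [h.price_eq_zero _ hi, hi, hv, zero_add]
    exact hε
  · exact (hsat i hi).price_le (hv i)

theorem sum_price_le [Finite ι] (h : IsReserveState E ρ A P) (hsat : WinnersSatisfied ε v A P)
    (hv : ∀ i, v i ∅ = 0) (hρ : 0 ≤ ρ) (hε : 0 ≤ ε) :
    ∑ o, P o ≤ ∑ i, ((⨆ T, v i T) + ε) + Fintype.card σ * ρ := by
  rw [Fintype.sum_sum_type, ← nsmul_eq_mul, ← Finset.card_univ, ← Finset.sum_const]
  refine add_le_add (Finset.sum_le_sum fun i _ => ?_)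
    (Finset.sum_le_sum fun s _ => h.seller_price_le hρ s)
  exact (h.buyer_price_le hsat hv hε i).trans
    (add_le_add_left (le_ciSup (Set.finite_range (v i)).bddAbove _) ε)

end IsReserveState

theorem exists_isReserveState_isSatisfied_of_pos [Finite ι] (hE : Pairwise (Disjoint on E))
    (hρE : ∀ s, E s = ∅ → ρ = 0) (hρ : 0 ≤ ρ) (hv : ∀ i, v i ∅ = 0) (hε : 0 < ε) :
    ∃ A P, IsReserveState E ρ A P ∧ ∀ i, IsSatisfied ε (v i) A P (.inl i) := by
  let totals : Set ℝ := {q | ∃ A P, IsReserveState E ρ A P ∧ WinnersSatisfied ε v A P ∧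
    ∑ o, P o = q}
  have totals_nonempty : totals.Nonempty :=
    ⟨_, _, _, isReserveState_initial hE hρE, fun _ hi => absurd rfl hi, rfl⟩
  have totals_bddAbove : BddAbove totals := by
    refine ⟨∑ i, ((⨆ T, v i T) + ε) + Fintype.card σ * ρ, ?_⟩
    rintro _ ⟨A, P, h, hsat, rfl⟩
    exact h.sum_price_le hsat hv hρ hε.le
  obtain ⟨_, ⟨A, P, h, hsat, rfl⟩, hlt⟩ :=
    exists_lt_of_lt_csSup totals_nonempty (sub_lt_self (sSup totals) hε)
  refine ⟨A, P, h, fun j => ?_⟩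
  by_contra hj
  obtain ⟨A', P', h', hsat', hsum⟩ := h.exists_takeover hsat hv hρ hε.le hj
  have := le_csSup totals_bddAbove ⟨A', P', h', hsat', rfl⟩
  linarith

theorem isCompact_setOf_isReserveState_isSatisfied (hρ : 0 ≤ ρ) (hv : ∀ i, v i ∅ = 0)
    (A : α ⊕ σ → Finset ι) (ε : ℝ) :
    IsCompact {P | IsReserveState E ρ A P ∧ ∀ i, IsSatisfied ε (v i) A P (.inl i)} := by
  have closed : IsClosed {P | IsReserveState E ρ A P ∧ ∀ i, IsSatisfied ε (v i) A P (.inl i)} := by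
    simp only [Set.ofPred_and, Set.ofPred_forall]
    exact (isClosed_setOf_isReserveState E ρ A).inter
      (isClosed_iInter fun i => isClosed_setOf_isSatisfied ..)
  refine isCompact_Icc.of_isClosed_subset (s := Set.Icc (fun _ => 0)
    (Sum.elim (fun i => v i (A (.inl i)) + ε) fun _ => ρ)) closed ?_
  rintro P ⟨h, hsat⟩
  refine ⟨h.price_nonneg hρ, ?_⟩
  rintro (i | s)
  · exact (hsat i).price_le (hv i)
  · exact h.seller_price_le hρ s

theorem exists_isReserveState_isSatisfied_zero [Finite ι] (hE : Pairwise (Disjoint on E))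
    (hρE : ∀ s, E s = ∅ → ρ = 0) (hρ : 0 ≤ ρ) (hv : ∀ i, v i ∅ = 0) :
    ∃ A P, IsReserveState E ρ A P ∧ ∀ i, IsSatisfied 0 (v i) A P (.inl i) := by
  let prices (A : α ⊕ σ → Finset ι) (ε : ℝ) : Set (α ⊕ σ → ℝ) :=
    {P | IsReserveState E ρ A P ∧ ∀ i, IsSatisfied ε (v i) A P (.inl i)}
  have prices_mono (A) : Monotone (prices A) :=
    fun ε ε' hε P hP => ⟨hP.1, fun i => (hP.2 i).mono hε⟩
  have prices_compact (A ε) : IsCompact (prices A ε) :=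
    isCompact_setOf_isReserveState_isSatisfied hρ hv A ε
  obtain ⟨A, hA⟩ : ∃ A, ∀ ε > 0, (prices A ε).Nonempty :=
    exists_forall_pos_of_forall_pos_exists (fun ε ε' hε A hA => hA.mono (prices_mono A hε))
      fun ε hε => exists_isReserveState_isSatisfied_of_pos hE hρE hρ hv hε
  have : Nonempty {ε : ℝ // 0 < ε} := ⟨1, one_pos⟩
  obtain ⟨P, hP⟩ := IsCompact.nonempty_iInter_of_directed_nonempty_isCompact_isClosed
    (fun ε : {ε : ℝ // 0 < ε} => prices A ε)
    (Monotone.directed_ge fun ε ε' hε => prices_mono A hε) (fun ε => hA ε ε.2)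
    (fun ε => prices_compact A ε) fun ε => (prices_compact A ε).isClosed
  rw [Set.mem_iInter] at hP
  refine ⟨A, P, (hP ⟨1, one_pos⟩).1, fun i S => le_of_forall_pos_le_add fun ε hε => ?_⟩
  rw [add_zero]
  exact (hP ⟨ε, hε⟩).2 i S

namespace IsReserveState

theorem seller_price_le_buyer_price {s : σ} {i : α} (h : IsReserveState E ρ A P) (hρ : 0 ≤ ρ)
    (hsat : IsSatisfied 0 (v i) A P (.inl i)) (hv : v i ∅ = 0) (hs : 2 * ρ ≤ v i (E s)) :
    P (.inr s) ≤ P (.inl i) := by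
  by_cases hi : A (.inl i) = ∅
  · by_cases hAs : A (.inr s) = ∅
    · rw [h.price_eq_zero _ hi, h.price_eq_zero _ hAs]
    obtain ⟨hlot, hprice⟩ := h.seller_eq s hAs
    have := hsat {.inr s}
    simp only [ownerUtil, Finset.singleton_biUnion, Finset.sum_singleton, hlot, hprice, hi, hv,
      h.price_eq_zero _ hi] at this
    rw [hprice, h.price_eq_zero _ hi]
    linarith
  · exact (h.seller_price_le hρ s).trans (h.reserve_le_price _ hi)

theorem card_mul_reserve_le_two_mul_sum_buyer_price (h : IsReserveState E ρ A P) (hρ : 0 ≤ ρ)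
    (hsat : ∀ i, IsSatisfied 0 (v i) A P (.inl i)) (hv : ∀ i, v i ∅ = 0) (b : σ ↪ α)
    (hb : ∀ s, 2 * ρ ≤ v (b s) (E s)) :
    Fintype.card σ * ρ ≤ 2 * ∑ i, P (.inl i) := by
  have sellers_le_buyers : ∑ s, P (.inr s) ≤ ∑ i, P (.inl i) :=
    calc ∑ s, P (.inr s) ≤ ∑ s, P (.inl (b s)) :=
          Finset.sum_le_sum fun s _ => h.seller_price_le_buyer_price hρ (hsat _) (hv _) (hb s)
      _ = ∑ i ∈ univ.map b, P (.inl i) := (Finset.sum_map univ b fun i => P (.inl i)).symm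
      _ ≤ ∑ i, P (.inl i) :=
          Finset.sum_le_univ_sum_of_nonneg fun i => h.price_nonneg hρ (.inl i)
  have := h.card_mul_reserve_le
  rw [Fintype.sum_sum_type] at this
  linarith

end IsReserveState

end ReserveAuction

section BundlePrices

variable {ι : Type} [Fintype ι] [DecidableEq ι] {n : ℕ} {v : Fin n → Finset ι → ℝ}
  {X : Fin n → Finset ι} {P : Fin n → ℝ} {p : Finset ι → ℝ}

theorem mem_bundles {B : Finset ι} : B ∈ Bundles X ↔ B ≠ ∅ ∧ (B = unalloc X ∨ ∃ i, X i = B) := by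
  simp [Bundles]

theorem IsCWE.revenue_nonneg (h : IsCWE v X p) : 0 ≤ Revenue X p :=
  Finset.sum_nonneg fun i hi =>
    h.2.1 _ (mem_bundles.mpr ⟨(Finset.mem_filter.mp hi).2, .inr ⟨i, rfl⟩⟩)

theorem IsAlloc.injOn_ne_empty (hX : IsAlloc X) : Set.InjOn X {i | X i ≠ ∅} := by
  intro i hi j _ hij
  by_contra hne
  have := hX i j hne
  rw [← hij, disjoint_self] at this
  exact hi this

theorem ne_unalloc {i : Fin n} (hi : X i ≠ ∅) : X i ≠ unalloc X := by
  intro heq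
  have disj : Disjoint (X i) (unalloc X) :=
    Finset.disjoint_sdiff.mono_left (Finset.le_sup (f := X) (Finset.mem_univ i))
  rw [← heq, disjoint_self] at disj
  exact hi disj

/-- The bundle prices charging `P i` for the bundle of agent `i`; the unallocated bundle is
priced at `∑ i, v i univ`, which no agent is willing to exceed. -/
def bundlePrice (v : Fin n → Finset ι → ℝ) (X : Fin n → Finset ι) (P : Fin n → ℝ)
    (B : Finset ι) : ℝ :=
  if B = unalloc X then ∑ i, v i univ else ∑ i with X i = B, P i

theorem bundlePrice_unalloc : bundlePrice v X P (unalloc X) = ∑ i, v i univ := if_pos rfl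

theorem bundlePrice_apply (hX : IsAlloc X) {i : Fin n} (hi : X i ≠ ∅) :
    bundlePrice v X P (X i) = P i := by
  have filter_eq : ({j | X j = X i} : Finset (Fin n)) = {i} := by
    ext j
    simp only [Finset.mem_filter, Finset.mem_univ, true_and, Finset.mem_singleton]
    exact ⟨fun hj => hX.injOn_ne_empty (hj.trans_ne hi) hi hj, fun hj => hj ▸ rfl⟩
  rw [bundlePrice, if_neg (ne_unalloc hi), filter_eq, Finset.sum_singleton]

theorem bundlePrice_nonneg (hv : ∀ i, 0 ≤ v i univ) (hP : ∀ i, 0 ≤ P i) (B : Finset ι) :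
    0 ≤ bundlePrice v X P B := by
  rw [bundlePrice]
  split_ifs
  · exact Finset.sum_nonneg fun i _ => hv i
  · exact Finset.sum_nonneg fun i _ => hP i

theorem revenue_bundlePrice (hX : IsAlloc X) (hP₀ : ∀ i, X i = ∅ → P i = 0) :
    Revenue X (bundlePrice v X P) = ∑ i, P i := by
  rw [Revenue, Finset.sum_congr rfl fun i hi => bundlePrice_apply hX (Finset.mem_filter.mp hi).2]
  exact Finset.sum_filter_of_ne fun i _ hPi hXi => hPi (hP₀ i hXi)

theorem util_bundlePrice_own {u : Finset ι → ℝ} (hX : IsAlloc X) (hP₀ : ∀ i, X i = ∅ → P i = 0)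
    (i : Fin n) : util u (bundlePrice v X P) (own X i) = u (X i) - P i := by
  by_cases hi : X i = ∅
  · simp [util, own, hi, hP₀ i hi]
  · simp [util, own, hi, bundlePrice_apply hX hi]

theorem util_bundlePrice_of_unalloc_notMem {u : Finset ι → ℝ} {S : Finset (Finset ι)}
    (hX : IsAlloc X) (hS : S ⊆ Bundles X) (hS₀ : unalloc X ∉ S) :
    util u (bundlePrice v X P) S = ownerUtil u X P {i | X i ∈ S} := by
  have ne_empty {i} (hi : i ∈ ({i | X i ∈ S} : Finset (Fin n))) : X i ≠ ∅ :=
    (mem_bundles.mp (hS (Finset.mem_filter.mp hi).2)).1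
  have eq_image : S = ({i | X i ∈ S} : Finset (Fin n)).image X := by
    ext B
    simp only [Finset.mem_image, Finset.mem_filter, Finset.mem_univ, true_and]
    refine ⟨fun hB => ?_, fun ⟨_, hi, hiB⟩ => hiB ▸ hi⟩
    obtain ⟨-, rfl | ⟨i, rfl⟩⟩ := mem_bundles.mp (hS hB)
    · exact absurd hB hS₀
    · exact ⟨i, hB, rfl⟩
  have sup_eq : S.sup id = ({i | X i ∈ S} : Finset (Fin n)).biUnion X := by
    conv_lhs => rw [eq_image]
    rw [Finset.sup_image, Finset.sup_eq_biUnion, Function.id_comp]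
  have sum_eq : ∑ B ∈ S, bundlePrice v X P B = ∑ i with X i ∈ S, P i := by
    conv_lhs => rw [eq_image]
    rw [Finset.sum_image (hX.injOn_ne_empty.mono fun i hi => ne_empty hi)]
    exact Finset.sum_congr rfl fun i hi => bundlePrice_apply hX (ne_empty hi)
  rw [util, ownerUtil, sup_eq, sum_eq]

theorem isCWE_bundlePrice (hv : ∀ i, ValidVal (v i)) (hX : IsAlloc X) (hP : ∀ i, 0 ≤ P i)
    (hP₀ : ∀ i, X i = ∅ → P i = 0) (hsat : ∀ i, IsSatisfied 0 (v i) X P i) :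
    IsCWE v X (bundlePrice v X P) := by
  have price_nonneg := bundlePrice_nonneg (X := X) (fun i => (hv i).1 univ) hP
  refine ⟨hX, fun B _ => price_nonneg B, fun i S hS => ?_⟩
  rw [util_bundlePrice_own hX hP₀]
  by_cases hS₀ : unalloc X ∈ S
  · have value_le_price : v i (S.sup id) ≤ ∑ B ∈ S, bundlePrice v X P B :=
      calc v i (S.sup id) ≤ v i univ := (hv i).2.1 _ _ (Finset.subset_univ _)
        _ ≤ ∑ k, v k univ :=
          Finset.single_le_sum (f := fun k => v k univ) (fun k _ => (hv k).1 univ)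
            (Finset.mem_univ i)
        _ = bundlePrice v X P (unalloc X) := bundlePrice_unalloc.symm
        _ ≤ ∑ B ∈ S, bundlePrice v X P B := Finset.single_le_sum (fun B _ => price_nonneg B) hS₀
    have price_le := (hsat i).price_le (hv i).2.2
    rw [util]
    linarith
  · rw [util_bundlePrice_of_unalloc_notMem hX hS hS₀]
    simpa using hsat i _

end BundlePrices

theorem exists_cwe_log_revenue_of_allocation_general {ι : Type} [Fintype ι] [DecidableEq ι] {n : ℕ}
    {v : Fin n → Finset ι → ℝ} (hv : ∀ i, ValidVal (v i)) {Y : Fin n → Finset ι} (hY : IsAlloc Y) :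
    ∃ (X : Fin n → Finset ι) (p : Finset ι → ℝ),
      IsCWE v X p ∧ SW v Y ≤ 4 * harmonic n * Revenue X p := by
  have hv₀ (i) : v i ∅ = 0 := (hv i).2.2
  obtain ⟨t, ht, hsum⟩ :=
    exists_threshold_sum_le_harmonic_mul univ (a := fun i => v i (Y i)) fun i _ => (hv i).1 _
  let E (s : {i // t ≤ v i (Y i)}) : Finset ι := Y s
  have reserve_eq_zero (s) (hs : E s = ∅) : t / 2 = 0 := by
    have := s.2
    rw [show Y s = ∅ from hs, hv₀] at this
    linarith
  obtain ⟨A, P, h, hsat⟩ := exists_isReserveState_isSatisfied_zero (E := E) (v := v)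
    (fun s s' hs => hY s s' (Subtype.coe_ne_coe.mpr hs)) reserve_eq_zero (by positivity) hv₀
  have hX : IsAlloc (A ∘ Sum.inl) := fun i j hij => h.pairwise_disjoint (Sum.inl_injective.ne hij)
  have hP₀ (i) (hi : (A ∘ Sum.inl) i = ∅) : (P ∘ Sum.inl) i = 0 := h.price_eq_zero _ hi
  refine ⟨A ∘ Sum.inl, bundlePrice v (A ∘ Sum.inl) (P ∘ Sum.inl),
    isCWE_bundlePrice hv hX (fun i => h.price_nonneg (by positivity) _) hP₀
      fun i => (hsat i).comp_embedding .inl, ?_⟩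
  have lots_le := h.card_mul_reserve_le_two_mul_sum_buyer_price (by positivity) hsat hv₀
    (.subtype _) fun s => (by ring : 2 * (t / 2) = t).trans_le s.2
  rw [Fintype.card_subtype] at lots_le
  rw [Finset.card_univ, Fintype.card_fin] at hsum
  have harmonic_nonneg : (0 : ℝ) ≤ harmonic n := by
    exact_mod_cast Finset.sum_nonneg fun i _ => by positivity
  rw [revenue_bundlePrice hX hP₀, mul_comm (4 : ℝ), mul_assoc]
  exact hsum.trans (mul_le_mul_of_nonneg_left (by dsimp; linarith) harmonic_nonneg)

/-- for every auction with `n ≥ 1` agents and every allocation `Y`, there exists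
a CWE whose revenue is at least `SW(Y) / (16·⌈log₂(2n)⌉)`. -/
theorem exists_cwe_log_revenue_of_allocation {ι : Type} [Fintype ι] [DecidableEq ι] (n : ℕ)
    (hn : 1 ≤ n)
    (v : Fin n → Finset ι → ℝ) (hv : ∀ i, ValidVal (v i))
    (Y : Fin n → Finset ι) (hY : IsAlloc Y) :
    ∃ (X : Fin n → Finset ι) (p : Finset ι → ℝ),
      IsCWE v X p ∧ Revenue X p ≥ SW v Y / (16 * (Nat.clog 2 (2 * n) : ℝ)) := by
  obtain ⟨X, p, hcwe, hrev⟩ := exists_cwe_log_revenue_of_allocation_general hv hY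
  have revenue_nonneg := hcwe.revenue_nonneg
  have := mul_le_mul_of_nonneg_right (harmonic_le_clog_two_mul n) revenue_nonneg
  refine ⟨X, p, hcwe, div_le_of_le_mul₀ (by positivity) revenue_nonneg ?_⟩
  nlinarith
end
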